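/- arXiv:1003.5072 — 2 statements merged into one kernel-verified Lean document; each statement's English description precedes it below -/
import Mathlib

section
/- Let n ≥ 1, t ≥ 0 and let q₁, q₂ satisfy 0 < q₂ ≤ q₁ < 1 and q₂ − 1 = e^{2t}(q₁ − 1). Then for every measurable function f : ℝ^n → ℝ with 0 < a ≤ f ≤ b for some constants a, b, one has (∫ f^{q₁} dγ)^{1/q₁} ≤ (∫ (N_t f)^{q₂} dγ)^{1/q₂} (reverse hypercontractivity for the Ornstein–Uhlenbeck semigroup). -/
open MeasureTheory Real

noncomputable def gaussianMeasure (n : ℕ) : Measure (EuclideanSpace ℝ (Fin n)) :=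
  volume.withDensity fun x => ENNReal.ofReal ((2 * π) ^ (-(n : ℝ) / 2) * Real.exp (-‖x‖ ^ 2 / 2))

/-- Ornstein-Uhlenbeck semigroup via the Mehler formula. -/
noncomputable def OU (n : ℕ) (t : ℝ) (f : EuclideanSpace ℝ (Fin n) → ℝ)
    (x : EuclideanSpace ℝ (Fin n)) : ℝ :=
  ∫ y, f (Real.exp (-t) • x + Real.sqrt (1 - Real.exp (-2 * t)) • y) ∂(gaussianMeasure n)

/-- Mean value estimate turning a power bound on the derivative into one on the increment. -/
lemma abs_le_mul_abs_pow_of_hasDerivAt {a b u x K : ℝ} {k : ℕ} (hu : u ∈ Set.Icc a b)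
    (hx : x ∈ Set.Icc a b) {R R' : ℝ → ℝ} (hK : 0 ≤ K)
    (hR : ∀ y ∈ Set.Icc a b, HasDerivAt R (R' y) y)
    (hR0 : R u = 0) (hR' : ∀ y ∈ Set.Icc a b, |R' y| ≤ K * |y - u| ^ k) :
    |R x| ≤ K * |x - u| ^ (k + 1) := by
  have hsub : Set.uIcc u x ⊆ Set.Icc a b := Set.ordConnected_Icc.uIcc_subset hu hx
  have := (convex_uIcc u x).norm_image_sub_le_of_norm_hasDerivWithin_le (C := K * |x - u| ^ k)
    (fun y hy => (hR y (hsub hy)).hasDerivWithinAt)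
    (fun y hy => by
      refine (hR' y (hsub hy)).trans ?_
      exact mul_le_mul_of_nonneg_left
        (pow_le_pow_left₀ (abs_nonneg _) (Set.abs_sub_left_of_mem_uIcc hy) k) hK)
    Set.left_mem_uIcc Set.right_mem_uIcc
  simp only [hR0, sub_zero, norm_eq_abs] at this
  calc |R x| ≤ _ := this
    _ = _ := by ring

lemma rpow_le_add_rpow_of_mem_Icc {a b u : ℝ} (ha : 0 < a) (hu : u ∈ Set.Icc a b) (r : ℝ) :
    u ^ r ≤ a ^ r + b ^ r := by
  have hu0 : 0 < u := ha.trans_le hu.1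
  have hb : 0 < b := hu0.trans_le hu.2
  rcases le_total 0 r with h | h
  · have := rpow_le_rpow hu0.le hu.2 h
    have := rpow_nonneg ha.le r
    linarith
  · have := rpow_le_rpow_of_nonpos ha hu.1 h
    have := rpow_nonneg hb.le r
    linarith

lemma exists_abs_rpow_sub_le {a b : ℝ} (ha : 0 < a) (hb : 0 < b) (r : ℝ) :
    ∃ K, 0 ≤ K ∧ ∀ u ∈ Set.Icc a b, ∀ x ∈ Set.Icc a b,
      |x ^ r - u ^ r| ≤ K * |x - u| ^ 1 := by
  refine ⟨|r| * (a ^ (r - 1) + b ^ (r - 1)), by positivity, fun u hu x hx => ?_⟩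
  refine abs_le_mul_abs_pow_of_hasDerivAt (k := 0) (R := fun x => x ^ r - u ^ r)
    (R' := fun x => r * x ^ (r - 1)) hu hx (by positivity) (fun y hy => ?_) (by simp) fun y hy => ?_
  · exact (hasDerivAt_rpow_const (Or.inl (ha.trans_le hy.1).ne')).sub_const _
  · rw [abs_mul, abs_of_nonneg (rpow_nonneg (ha.le.trans hy.1) _), pow_zero, mul_one]
    gcongr
    exact rpow_le_add_rpow_of_mem_Icc ha hy _

lemma exists_abs_rpow_taylor_one_le {a b : ℝ} (ha : 0 < a) (hb : 0 < b) (r : ℝ) :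
    ∃ K, 0 ≤ K ∧ ∀ u ∈ Set.Icc a b, ∀ x ∈ Set.Icc a b,
      |x ^ r - u ^ r - r * u ^ (r - 1) * (x - u)| ≤ K * |x - u| ^ 2 := by
  obtain ⟨K, hK, h⟩ := exists_abs_rpow_sub_le ha hb (r - 1)
  refine ⟨|r| * K, by positivity, fun u hu x hx => ?_⟩
  refine abs_le_mul_abs_pow_of_hasDerivAt (k := 1)
    (R := fun x => x ^ r - u ^ r - r * u ^ (r - 1) * (x - u))
    (R' := fun x => r * (x ^ (r - 1) - u ^ (r - 1)))
    hu hx (by positivity) (fun y hy => ?_) (by simp) fun y hy => ?_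
  · have h1 := (hasDerivAt_rpow_const (p := r) (Or.inl (ha.trans_le hy.1).ne')).sub_const (u ^ r)
    have h2 := ((hasDerivAt_id y).sub_const u).const_mul (r * u ^ (r - 1))
    convert! h1.sub h2 using 1
    ring
  · rw [abs_mul, mul_assoc |r| K]
    gcongr
    exact h u hu y hy

/-- Second order Taylor estimate for `x ↦ x ^ r`, uniform on a compact interval of `(0, ∞)`. -/
lemma exists_abs_rpow_taylor_two_le {a b : ℝ} (ha : 0 < a) (hb : 0 < b) (r : ℝ) :
    ∃ K, 0 ≤ K ∧ ∀ u ∈ Set.Icc a b, ∀ x ∈ Set.Icc a b,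
      |x ^ r - u ^ r - r * u ^ (r - 1) * (x - u) - r * (r - 1) / 2 * u ^ (r - 2) * (x - u) ^ 2|
        ≤ K * |x - u| ^ 3 := by
  obtain ⟨K, hK, h⟩ := exists_abs_rpow_taylor_one_le ha hb (r - 1)
  refine ⟨|r| * K, by positivity, fun u hu x hx => ?_⟩
  refine abs_le_mul_abs_pow_of_hasDerivAt (k := 2)
    (R := fun x => x ^ r - u ^ r - r * u ^ (r - 1) * (x - u)
      - r * (r - 1) / 2 * u ^ (r - 2) * (x - u) ^ 2)
    (R' := fun x => r * (x ^ (r - 1) - u ^ (r - 1) - (r - 1) * u ^ (r - 1 - 1) * (x - u)))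
    hu hx (by positivity) (fun y hy => ?_) (by simp) fun y hy => ?_
  · have h1 := (hasDerivAt_rpow_const (p := r) (Or.inl (ha.trans_le hy.1).ne')).sub_const (u ^ r)
    have h2 := ((hasDerivAt_id y).sub_const u).const_mul (r * u ^ (r - 1))
    have h3 := (((hasDerivAt_id y).sub_const u).pow 2).const_mul (r * (r - 1) / 2 * u ^ (r - 2))
    convert! (h1.sub h2).sub h3 using 1
    rw [show r - 1 - 1 = r - 2 by ring]
    simp
    ring
  · rw [abs_mul, mul_assoc |r| K]
    gcongr
    exact h u hu y hy

/-- On `[a, b]²`, `B` is bounded by `K` and lies above quadratic expansions up to a cubic error,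
whose quadratic part stays nonnegative after multiplying the mixed coefficient by `ρ`. -/
structure IsCorrConvexWith (K ρ a b : ℝ) (B : ℝ → ℝ → ℝ) : Prop where
  nonneg : 0 ≤ K
  measurable : Measurable (Function.uncurry B)
  bound : ∀ u ∈ Set.Icc a b, ∀ v ∈ Set.Icc a b, |B u v| ≤ K
  expansion : ∀ u ∈ Set.Icc a b, ∀ v ∈ Set.Icc a b, ∃ d₁ d₂ c₁ c₂ c₃ : ℝ,
    0 ≤ c₁ ∧ c₁ ≤ K ∧ 0 ≤ c₃ ∧ c₃ ≤ K ∧ |c₂| ≤ K ∧ ρ ^ 2 * c₂ ^ 2 ≤ 4 * (c₁ * c₃) ∧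
    ∀ u' ∈ Set.Icc a b, ∀ v' ∈ Set.Icc a b,
      B u v + d₁ * (u' - u) + d₂ * (v' - v) + c₁ * (u' - u) ^ 2 + c₂ * ((u' - u) * (v' - v))
        + c₃ * (v' - v) ^ 2 - K * (|u' - u| ^ 3 + |v' - v| ^ 3) ≤ B u' v'

lemma abs_mul_add_expansion_le {x y e e' L T' S₀ S₁ S₂ T₁ T₂ b : ℝ} (hL : 0 ≤ L) (hb : 0 ≤ b)
    (hx : |x| ≤ b) (hS₁ : |S₁| ≤ L)
    (hS₂ : |S₂| ≤ L) (hT₁ : |T₁| ≤ L) (hT₂ : |T₂| ≤ L) (hT' : |T'| ≤ L)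
    (hS₀ : |S₀| ≤ L) (he : |e| ≤ L * |x| ^ 3) (he' : |e'| ≤ L * |y| ^ 3) :
    |e * T' + S₀ * e' + S₁ * x * e' + S₂ * x ^ 2 * e' + S₁ * T₂ * (x * y ^ 2)
      + S₂ * T₁ * (x ^ 2 * y) + S₂ * T₂ * (x ^ 2 * y ^ 2)|
      ≤ L ^ 2 * (4 + 2 * b + b ^ 2) * (|x| ^ 3 + |y| ^ 3) := by
  have hX : 0 ≤ |x| := abs_nonneg x
  have hY : 0 ≤ |y| := abs_nonneg y
  have m1 : |x| * |y| ^ 2 ≤ |x| ^ 3 + |y| ^ 3 := by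
    rcases le_total |x| |y| with h | h
    · nlinarith [mul_le_mul_of_nonneg_right h (sq_nonneg |y|), pow_nonneg hX 3]
    · nlinarith [mul_le_mul_of_nonneg_left (pow_le_pow_left₀ hY h 2) hX, pow_nonneg hY 3]
  have m2 : |x| ^ 2 * |y| ≤ |x| ^ 3 + |y| ^ 3 := by
    rcases le_total |x| |y| with h | h
    · nlinarith [mul_le_mul_of_nonneg_right (pow_le_pow_left₀ hX h 2) hY, pow_nonneg hX 3]
    · nlinarith [mul_le_mul_of_nonneg_left h (sq_nonneg |x|), pow_nonneg hY 3]
  have t1 : |e * T'| ≤ L ^ 2 * |x| ^ 3 := by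
    rw [abs_mul]
    calc |e| * |T'| ≤ (L * |x| ^ 3) * L := by gcongr
      _ = _ := by ring
  have t2 : |S₀ * e'| ≤ L ^ 2 * |y| ^ 3 := by
    rw [abs_mul]
    calc |S₀| * |e'| ≤ L * (L * |y| ^ 3) := by gcongr
      _ = _ := by ring
  have t3 : |S₁ * x * e'| ≤ L ^ 2 * b * |y| ^ 3 := by
    rw [abs_mul, abs_mul]
    calc |S₁| * |x| * |e'| ≤ L * b * (L * |y| ^ 3) := by gcongr
      _ = _ := by ring
  have t4 : |S₂ * x ^ 2 * e'| ≤ L ^ 2 * b ^ 2 * |y| ^ 3 := by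
    rw [abs_mul, abs_mul, abs_pow]
    calc |S₂| * |x| ^ 2 * |e'| ≤ L * b ^ 2 * (L * |y| ^ 3) := by gcongr
      _ = _ := by ring
  have t5 : |S₁ * T₂ * (x * y ^ 2)| ≤ L ^ 2 * (|x| ^ 3 + |y| ^ 3) := by
    rw [abs_mul, abs_mul, abs_mul, abs_pow]
    calc |S₁| * |T₂| * (|x| * |y| ^ 2) ≤ L * L * (|x| ^ 3 + |y| ^ 3) := by gcongr
      _ = _ := by ring
  have t6 : |S₂ * T₁ * (x ^ 2 * y)| ≤ L ^ 2 * (|x| ^ 3 + |y| ^ 3) := by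
    rw [abs_mul, abs_mul, abs_mul, abs_pow]
    calc |S₂| * |T₁| * (|x| ^ 2 * |y|) ≤ L * L * (|x| ^ 3 + |y| ^ 3) := by gcongr
      _ = _ := by ring
  have t7 : |S₂ * T₂ * (x ^ 2 * y ^ 2)| ≤ L ^ 2 * b * (|x| ^ 3 + |y| ^ 3) := by
    rw [abs_mul, abs_mul, abs_mul, abs_pow, abs_pow]
    calc |S₂| * |T₂| * (|x| ^ 2 * |y| ^ 2) = |S₂| * |T₂| * (|x| * (|x| * |y| ^ 2)) := by ring
      _ ≤ L * L * (b * (|x| ^ 3 + |y| ^ 3)) := by gcongr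
      _ = _ := by ring
  refine (abs_add_le _ _).trans ?_
  refine (add_le_add_left (abs_add_le _ _) _).trans ?_
  refine (add_le_add_left (add_le_add_left (abs_add_le _ _) _) _).trans ?_
  refine (add_le_add_left (add_le_add_left (add_le_add_left (abs_add_le _ _) _) _) _).trans ?_
  refine (add_le_add_left (add_le_add_left (add_le_add_left (add_le_add_left
    (abs_add_le _ _) _) _) _) _).trans ?_
  refine (add_le_add_left (add_le_add_left (add_le_add_left (add_le_add_left (add_le_add_left
    (abs_add_le _ _) _) _) _) _) _).trans ?_
  have p1 : 0 ≤ L ^ 2 * b * |x| ^ 3 := by positivity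
  have p2 : 0 ≤ L ^ 2 * b ^ 2 * |x| ^ 3 := by positivity
  have p3 : 0 ≤ L ^ 2 * |x| ^ 3 := by positivity
  have p4 : 0 ≤ L ^ 2 * |y| ^ 3 := by positivity
  linarith

lemma exists_isCorrConvexWith_rpow_mul_rpow {a b α β ρ : ℝ} (ha : 0 < a) (hb : 0 < b) (hα : 1 ≤ α)
    (hβ : 0 ≤ β) (hρ : ρ ^ 2 * (α * β) ≤ (α - 1) * (β + 1)) :
    ∃ K, IsCorrConvexWith K ρ a b fun u v => u ^ α * v ^ (-β) := by
  obtain ⟨K₁, hK₁, h₁⟩ := exists_abs_rpow_taylor_two_le ha hb α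
  obtain ⟨K₂, hK₂, h₂⟩ := exists_abs_rpow_taylor_two_le ha hb (-β)
  have key (c r : ℝ) : ∃ M, 0 ≤ M ∧ ∀ u ∈ Set.Icc a b, |c * u ^ r| ≤ M := by
    refine ⟨|c| * (a ^ r + b ^ r), by positivity, fun u hu => ?_⟩
    rw [abs_mul, abs_of_nonneg (rpow_nonneg (ha.le.trans hu.1) _)]
    gcongr
    exact rpow_le_add_rpow_of_mem_Icc ha hu _
  obtain ⟨L₁, p₁, l₁⟩ := key 1 α
  obtain ⟨L₂, p₂, l₂⟩ := key α (α - 1)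
  obtain ⟨L₃, p₃, l₃⟩ := key (α * (α - 1) / 2) (α - 2)
  obtain ⟨L₄, p₄, l₄⟩ := key 1 (-β)
  obtain ⟨L₅, p₅, l₅⟩ := key (-β) (-β - 1)
  obtain ⟨L₆, p₆, l₆⟩ := key (-β * (-β - 1) / 2) (-β - 2)
  simp only [one_mul] at l₁ l₄
  set L := K₁ + K₂ + L₁ + L₂ + L₃ + L₄ + L₅ + L₆ with hLdef
  have hL : 0 ≤ L := by positivity
  have hmul {s t : ℝ} (hs : |s| ≤ L) (ht : |t| ≤ L) :
      |s * t| ≤ L ^ 2 * (4 + 2 * b + b ^ 2) := by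
    rw [abs_mul]
    calc |s| * |t| ≤ L * L := by gcongr
      _ = L ^ 2 * 1 := by ring
      _ ≤ _ := by gcongr; nlinarith
  refine ⟨L ^ 2 * (4 + 2 * b + b ^ 2), by positivity, by fun_prop, fun u hu v hv => ?_,
    fun u hu v hv => ?_⟩
  · exact hmul ((l₁ u hu).trans (by linarith)) ((l₄ v hv).trans (by linarith))
  have hu0 : 0 < u := ha.trans_le hu.1
  have hv0 : 0 < v := ha.trans_le hv.1
  have b₁ : |u ^ α| ≤ L := (l₁ u hu).trans (by linarith)
  have b₂ := (l₂ u hu).trans (show L₂ ≤ L by linarith)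
  have b₃ := (l₃ u hu).trans (show L₃ ≤ L by linarith)
  have b₄ : |v ^ (-β)| ≤ L := (l₄ v hv).trans (by linarith)
  have b₅ := (l₅ v hv).trans (show L₅ ≤ L by linarith)
  have b₆ := (l₆ v hv).trans (show L₆ ≤ L by linarith)
  refine ⟨α * u ^ (α - 1) * v ^ (-β), u ^ α * (-β * v ^ (-β - 1)),
    α * (α - 1) / 2 * u ^ (α - 2) * v ^ (-β), (α * u ^ (α - 1)) * (-β * v ^ (-β - 1)),
    u ^ α * (-β * (-β - 1) / 2 * v ^ (-β - 2)), ?_, ?_, ?_, ?_, ?_, ?_, fun u' hu' v' hv' => ?_⟩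
  · have : 0 ≤ α - 1 := by linarith
    positivity
  · exact (le_abs_self _).trans (hmul b₃ b₄)
  · have : 0 ≤ -β * (-β - 1) := by nlinarith
    positivity
  · exact (le_abs_self _).trans (hmul b₁ b₆)
  · exact hmul b₂ b₅
  · have e₁ : u ^ α = u ^ (α - 2) * u ^ 2 := by
      rw [← rpow_natCast, ← rpow_add hu0]; congr 1; push_cast; ring
    have e₂ : u ^ (α - 1) = u ^ (α - 2) * u := by
      nth_rw 3 [← rpow_one u]; rw [← rpow_add hu0]; congr 1; ring
    have e₃ : v ^ (-β) = v ^ (-β - 2) * v ^ 2 := by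
      rw [← rpow_natCast, ← rpow_add hv0]; congr 1; push_cast; ring
    have e₄ : v ^ (-β - 1) = v ^ (-β - 2) * v := by
      nth_rw 3 [← rpow_one v]; rw [← rpow_add hv0]; congr 1; ring
    rw [e₁, e₂, e₃, e₄]
    have hp : 0 ≤ (u ^ (α - 2) * u * (v ^ (-β - 2) * v)) ^ 2 * (α * β) := by positivity
    have := mul_le_mul_of_nonneg_left hρ hp
    nlinarith [this]
  · have he := h₁ u hu u' hu'
    have he' := h₂ v hv v' hv'
    set x := u' - u
    set y := v' - v
    have hxb : |x| ≤ b := abs_le.2 ⟨by linarith [hu.2, hu'.1], by linarith [hu.1, hu'.2]⟩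
    set e := u' ^ α - u ^ α - α * u ^ (α - 1) * x - α * (α - 1) / 2 * u ^ (α - 2) * x ^ 2 with hedef
    set e' := v' ^ (-β) - v ^ (-β) - -β * v ^ (-β - 1) * y
      - -β * (-β - 1) / 2 * v ^ (-β - 2) * y ^ 2 with hedef'
    have b₇ : |v' ^ (-β)| ≤ L := (l₄ v' hv').trans (by linarith)
    have := abs_mul_add_expansion_le (x := x) (y := y) (e := e) (e' := e') hL hb.le hxb b₂ b₃ b₅ b₆
      b₇ b₁
      (he.trans (by gcongr; linarith)) (he'.trans (by gcongr; linarith))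
    have h2 := neg_le_of_abs_le this
    have hu'e : u' ^ α = u ^ α + α * u ^ (α - 1) * x + α * (α - 1) / 2 * u ^ (α - 2) * x ^ 2 + e := by
      rw [hedef]; ring
    have hv'e : v' ^ (-β) = v ^ (-β) + -β * v ^ (-β - 1) * y
      + -β * (-β - 1) / 2 * v ^ (-β - 2) * y ^ 2 + e' := by
      rw [hedef']; ring
    clear_value e e' L
    have : u' ^ α * v' ^ (-β) = (u ^ α + α * u ^ (α - 1) * x + α * (α - 1) / 2 * u ^ (α - 2) * x ^ 2)
      * (v ^ (-β) + -β * v ^ (-β - 1) * y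
      + -β * (-β - 1) / 2 * v ^ (-β - 2) * y ^ 2 + e') + e * v' ^ (-β) := by
      rw [hu'e, ← hv'e]; ring
    rw [this]
    linarith

/-- `f` takes values in `[a, b]` and has a measurable field of approximate differentials, bounded
by `δ` and with second order error at most `δ ^ 2 * ‖z‖ ^ 2`. -/
structure IsSmoothWith {E : Type*} [NormedAddCommGroup E] [NormedSpace ℝ E] [MeasurableSpace E]
    (a b δ : ℝ) (f : E → ℝ) : Prop where
  measurable : Measurable f
  mem : ∀ x, f x ∈ Set.Icc a b
  exists_approx : ∃ p : E → StrongDual ℝ E, StronglyMeasurable p ∧ (∀ x, ‖p x‖ ≤ δ) ∧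
    ∀ x z, |f (x + z) - f x - p x z| ≤ δ ^ 2 * ‖z‖ ^ 2

lemma integrable_of_mem_Icc {Ω : Type*} [MeasurableSpace Ω] {m : Measure Ω} [IsFiniteMeasure m]
    {f : Ω → ℝ} {a b : ℝ} (hf : Measurable f) (h : ∀ x, f x ∈ Set.Icc a b) : Integrable f m :=
  Integrable.of_mem_Icc a b hf.aemeasurable (.of_forall h)

lemma integral_mem_Icc {Ω : Type*} [MeasurableSpace Ω] {m : Measure Ω} [IsProbabilityMeasure m]
    {f : Ω → ℝ} {a b : ℝ} (hf : Measurable f) (h : ∀ x, f x ∈ Set.Icc a b) :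
    ∫ x, f x ∂m ∈ Set.Icc a b := by
  have hi := integrable_of_mem_Icc (m := m) hf h
  constructor
  · simpa using integral_mono (integrable_const a) hi fun x => (h x).1
  · simpa using integral_mono hi (integrable_const b) fun x => (h x).2

section Smooth

variable {E : Type*} [NormedAddCommGroup E] [NormedSpace ℝ E] [MeasurableSpace E] [BorelSpace E]
  {a b δ : ℝ} {f : E → ℝ}

lemma IsSmoothWith.comp_smul_add (hf : IsSmoothWith a b δ f) {c : ℝ} (hc : 0 ≤ c) (x₀ : E) :
    IsSmoothWith a b (c * δ) fun x => f (c • (x₀ + x)) := by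
  obtain ⟨p, hp, hpb, hpa⟩ := hf.exists_approx
  refine ⟨hf.measurable.comp (by fun_prop), fun x => hf.mem _,
    fun x => c • p (c • (x₀ + x)), ?_, fun x => ?_, fun x z => ?_⟩
  · exact (hp.comp_measurable (by fun_prop : Measurable fun x => c • (x₀ + x))).const_smul c
  · rw [norm_smul, norm_of_nonneg hc]
    exact mul_le_mul_of_nonneg_left (hpb _) hc
  · have := hpa (c • (x₀ + x)) (c • z)
    rw [← smul_add, add_assoc, norm_smul, norm_of_nonneg hc] at this
    simp only [smul_apply, map_smul] at this ⊢
    calc _ ≤ _ := this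
      _ = _ := by ring

lemma IsSmoothWith.integral_comp_smul_add [SecondCountableTopology E]
    (hf : IsSmoothWith a b δ f) {c : ℝ} (hc : 0 ≤ c)
    {Ω : Type*} [MeasurableSpace Ω] (m : Measure Ω) [IsProbabilityMeasure m] {Z : Ω → E}
    (hZ : Measurable Z) :
    IsSmoothWith a b (c * δ) fun x => ∫ w, f (c • (x + Z w)) ∂m := by
  obtain ⟨p, hp, hpb, hpa⟩ := hf.exists_approx
  have hmeas : Measurable fun q : E × Ω => c • (q.1 + Z q.2) := by fun_prop
  have hint (x : E) : Integrable (fun w => f (c • (x + Z w))) m :=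
    integrable_of_mem_Icc (hf.measurable.comp (by fun_prop)) fun w => hf.mem _
  have hpint (x : E) : Integrable (fun w => c • p (c • (x + Z w))) m :=
    (Integrable.of_bound (hp.comp_measurable
      (by fun_prop : Measurable fun w => c • (x + Z w))).aestronglyMeasurable δ
      (.of_forall fun w => hpb _)).smul c
  refine ⟨(StronglyMeasurable.integral_prod_right'
      (hf.measurable.comp hmeas).stronglyMeasurable).measurable,
    fun x => integral_mem_Icc (hf.measurable.comp (by fun_prop)) fun w => hf.mem _,
    fun x => ∫ w, c • p (c • (x + Z w)) ∂m, ?_, fun x => ?_, fun x z => ?_⟩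
  · exact StronglyMeasurable.integral_prod_right' ((hp.comp_measurable hmeas).const_smul c)
  · have := norm_integral_le_of_norm_le_const (μ := m) (C := c * δ)
      (f := fun w => c • p (c • (x + Z w))) (.of_forall fun w => by
        rw [norm_smul, norm_of_nonneg hc]
        exact mul_le_mul_of_nonneg_left (hpb _) hc)
    simpa using this
  · have hdiff : Integrable (fun w => f (c • (x + z + Z w)) - f (c • (x + Z w))) m :=
      (hint _).sub (hint _)
    have hlin : Integrable (fun w => (c • p (c • (x + Z w))) z) m :=
      (ContinuousLinearMap.apply ℝ ℝ z).integrable_comp (hpint x)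
    rw [ContinuousLinearMap.integral_apply (hpint x), ← integral_sub (hint _) (hint _),
      ← integral_sub hdiff hlin]
    have := norm_integral_le_of_norm_le_const (μ := m) (C := (c * δ) ^ 2 * ‖z‖ ^ 2)
      (f := fun w => f (c • (x + z + Z w)) - f (c • (x + Z w)) - (c • p (c • (x + Z w))) z)
      (.of_forall fun w => by
        have := hpa (c • (x + Z w)) (c • z)
        rw [← smul_add, norm_smul, norm_of_nonneg hc, add_right_comm] at this
        simp only [smul_apply, map_smul, norm_eq_abs] at this ⊢
        calc _ ≤ _ := this
          _ = _ := by ring)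
    simpa using this

end Smooth

section CorrelatedGaussian

variable {W E : Type*} [NormedAddCommGroup W] [NormedSpace ℝ W] [MeasurableSpace W]
  [NormedAddCommGroup E] [NormedSpace ℝ E] {a b K ρ : ℝ} {B : ℝ → ℝ → ℝ}

/-- The correlation of linear functionals of `X` and `Y` is at most `ρ` under `m`. -/
def CorrelationLE (ρ : ℝ) (m : Measure W) (X Y : W →L[ℝ] E) : Prop :=
  ∀ p q : StrongDual ℝ E, (∫ w, p (X w) * q (Y w) ∂m) ^ 2 ≤
    ρ ^ 2 * ((∫ w, p (X w) ^ 2 ∂m) * ∫ w, q (Y w) ^ 2 ∂m)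

lemma quadratic_correlation_nonneg {A C D c₁ c₂ c₃ : ℝ} (hA : 0 ≤ A) (hD : 0 ≤ D) (h₁ : 0 ≤ c₁)
    (h₃ : 0 ≤ c₃) (hc : ρ ^ 2 * c₂ ^ 2 ≤ 4 * (c₁ * c₃)) (hC : C ^ 2 ≤ ρ ^ 2 * (A * D)) :
    0 ≤ c₁ * A + c₂ * C + c₃ * D := by
  have h1 : (c₂ * C) ^ 2 ≤ (c₁ * A + c₃ * D) ^ 2 := by
    have e1 := mul_le_mul_of_nonneg_left hC (sq_nonneg c₂)
    have e2 := mul_le_mul_of_nonneg_left hc (mul_nonneg hA hD)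
    nlinarith [sq_nonneg (c₁ * A - c₃ * D)]
  have := abs_le_of_sq_le_sq' h1 (by positivity)
  linarith [this.1]

/-- First order control of a smooth function of `X` around its mean. -/
lemma IsSmoothWith.exists_linear_approx_mean [BorelSpace W] [MeasurableSpace E]
    [BorelSpace E] {δ : ℝ} {f : E → ℝ} (hf : IsSmoothWith a b δ f)
    (hδ : 0 ≤ δ) (hδ1 : δ ≤ 1) (m : Measure W) [IsProbabilityMeasure m] (X : W →L[ℝ] E)
    (hX : ∀ L : StrongDual ℝ E, Integrable (fun w => L (X w)) m ∧ ∫ w, L (X w) ∂m = 0)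
    (hX2 : Integrable (fun w => ‖X w‖ ^ 2) m) :
    ∃ p : StrongDual ℝ E, ∀ w,
      |f (X w) - (∫ w, f (X w) ∂m) - p (X w)| ≤
        δ ^ 2 * (‖X w‖ + ‖X w‖ ^ 2 + ∫ w, ‖X w‖ ^ 2 ∂m) ∧
      |p (X w)| ≤ δ * (‖X w‖ + ‖X w‖ ^ 2 + ∫ w, ‖X w‖ ^ 2 ∂m) ∧
      |f (X w) - (∫ w, f (X w) ∂m)| ≤ δ * (‖X w‖ + ‖X w‖ ^ 2 + ∫ w, ‖X w‖ ^ 2 ∂m) := by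
  obtain ⟨p, hp, hpb, hpa⟩ := hf.exists_approx
  have hM : 0 ≤ ∫ w, ‖X w‖ ^ 2 ∂m := integral_nonneg fun w => by positivity
  have hfi : Integrable (fun w => f (X w)) m :=
    integrable_of_mem_Icc (hf.measurable.comp X.continuous.measurable) fun w => hf.mem _
  have hrem (w : W) : |f (X w) - f 0 - p 0 (X w)| ≤ δ ^ 2 * ‖X w‖ ^ 2 := by
    simpa using hpa 0 (X w)
  have hmean : |(∫ w, f (X w) ∂m) - f 0| ≤ δ ^ 2 * ∫ w, ‖X w‖ ^ 2 ∂m := by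
    have h1 : ∫ w, (f (X w) - f 0 - p 0 (X w)) ∂m = (∫ w, f (X w) ∂m) - f 0 := by
      have hdiff : Integrable (fun w => f (X w) - f 0) m := hfi.sub (integrable_const _)
      rw [integral_sub hdiff (hX _).1, (hX _).2, integral_sub hfi (integrable_const _)]
      simp
    rw [← h1, ← integral_const_mul]
    exact (abs_integral_le_integral_abs).trans (integral_mono
      ((hfi.sub (integrable_const _)).sub (hX _).1).abs (hX2.const_mul _) hrem)
  have hlin (w : W) : |p 0 (X w)| ≤ δ * ‖X w‖ :=
    ((p 0).le_opNorm (X w)).trans (mul_le_mul_of_nonneg_right (hpb 0) (norm_nonneg _))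
  have hδ2 : δ ^ 2 ≤ δ := by nlinarith
  refine ⟨p 0, fun w => ?_⟩
  have hn := norm_nonneg (X w)
  have h1 : |f (X w) - (∫ w, f (X w) ∂m) - p 0 (X w)| ≤
      δ ^ 2 * (‖X w‖ ^ 2 + ∫ w, ‖X w‖ ^ 2 ∂m) := by
    have := abs_sub (f (X w) - f 0 - p 0 (X w)) ((∫ w, f (X w) ∂m) - f 0)
    rw [show f (X w) - f 0 - p 0 (X w) - ((∫ w, f (X w) ∂m) - f 0)
      = f (X w) - (∫ w, f (X w) ∂m) - p 0 (X w) by ring] at this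
    linarith [hrem w]
  refine ⟨h1.trans (by gcongr; linarith), (hlin w).trans (by gcongr; nlinarith), ?_⟩
  have h2 := abs_add_le (f (X w) - (∫ w, f (X w) ∂m) - p 0 (X w)) (p 0 (X w))
  rw [sub_add_cancel] at h2
  have h3 : δ ^ 2 * (‖X w‖ ^ 2 + ∫ w, ‖X w‖ ^ 2 ∂m) ≤ δ * (‖X w‖ ^ 2 + ∫ w, ‖X w‖ ^ 2 ∂m) := by
    gcongr
  linarith [hlin w]

lemma quadratic_expansion_stability {x y s t c₁ c₂ c₃ δ T : ℝ} (hδ : 0 ≤ δ) (hT : 0 ≤ T)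
    (hc₁ : |c₁| ≤ K) (hc₂ : |c₂| ≤ K) (hc₃ : |c₃| ≤ K)
    (hxs : |x - s| ≤ δ ^ 2 * T) (hyt : |y - t| ≤ δ ^ 2 * T)
    (hx : |x| ≤ δ * T) (hy : |y| ≤ δ * T) (hs : |s| ≤ δ * T) (ht : |t| ≤ δ * T) :
    c₁ * s ^ 2 + c₂ * (s * t) + c₃ * t ^ 2 - K * δ ^ 3 * (6 * T ^ 2 + 2 * T ^ 3) ≤
      c₁ * x ^ 2 + c₂ * (x * y) + c₃ * y ^ 2 - K * (|x| ^ 3 + |y| ^ 3) := by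
  have hK : 0 ≤ K := (abs_nonneg _).trans hc₁
  have key {z r z' r' : ℝ} (h : |z - r| ≤ δ ^ 2 * T) (h' : |z' - r'| ≤ δ ^ 2 * T)
      (hz : |z| ≤ δ * T) (hr : |r'| ≤ δ * T) {c : ℝ} (hc : |c| ≤ K) :
      |c * (z * z' - r * r')| ≤ K * δ ^ 3 * (2 * T ^ 2) := by
    have h1 : |z * z' - r * r'| ≤ 2 * δ ^ 3 * T ^ 2 := by
      rw [show z * z' - r * r' = z * (z' - r') + (z - r) * r' by ring]
      refine (abs_add_le _ _).trans ?_
      rw [abs_mul, abs_mul]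
      calc |z| * |z' - r'| + |z - r| * |r'|
          ≤ (δ * T) * (δ ^ 2 * T) + (δ ^ 2 * T) * (δ * T) := by gcongr
        _ = _ := by ring
    rw [abs_mul]
    calc |c| * |z * z' - r * r'| ≤ K * (2 * δ ^ 3 * T ^ 2) := by gcongr
      _ = _ := by ring
  have k1 := neg_le_of_abs_le (key hxs hxs hx hs hc₁)
  have k2 := neg_le_of_abs_le (key hxs hyt hx ht hc₂)
  have k3 := neg_le_of_abs_le (key hyt hyt hy ht hc₃)
  have k4 : K * |x| ^ 3 ≤ K * (δ * T) ^ 3 := by gcongr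
  have k5 : K * |y| ^ 3 ≤ K * (δ * T) ^ 3 := by gcongr
  linarith

variable [BorelSpace W] (m : Measure W) [ProbabilityTheory.IsGaussian m] (X Y : W →L[ℝ] E)

lemma integrable_one_add_norm_pow [SecondCountableTopology W] [CompleteSpace W] (k : ℕ) :
    Integrable (fun w => (1 + ‖w‖) ^ k) m := by
  have h := ((memLp_const (1 : ℝ)).add
    (ProbabilityTheory.IsGaussian.memLp_id m k (by simp)).norm).integrable_norm_pow'
  refine h.congr (.of_forall fun w => ?_)
  simp only [Pi.add_apply, id_eq]
  rw [norm_of_nonneg (by positivity)]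

lemma integrable_clm_mul_clm (p q : StrongDual ℝ E) :
    Integrable (fun w => p (X w) * q (Y w)) m :=
  (ProbabilityTheory.IsGaussian.memLp_dual m (p.comp X) 2 (by simp)).integrable_mul
    (ProbabilityTheory.IsGaussian.memLp_dual m (q.comp Y) 2 (by simp))

lemma exists_forall_le_integral_add_mul_cube [SecondCountableTopology W] [CompleteSpace W]
    [MeasurableSpace E] [BorelSpace E] (hB : IsCorrConvexWith K ρ a b B)
    (hm : ∫ w, w ∂m = 0) (hXY : CorrelationLE ρ m X Y) :
    ∃ C, 0 ≤ C ∧ ∀ δ, 0 ≤ δ → δ ≤ 1 → ∀ f g : E → ℝ, IsSmoothWith a b δ f → IsSmoothWith a b δ g →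
      B (∫ w, f (X w) ∂m) (∫ w, g (Y w) ∂m) ≤ (∫ w, B (f (X w)) (g (Y w)) ∂m) + C * δ ^ 3 := by
  have hcent (Z : W →L[ℝ] E) (L : StrongDual ℝ E) :
      Integrable (fun w => L (Z w)) m ∧ ∫ w, L (Z w) ∂m = 0 := by
    refine ⟨(ProbabilityTheory.IsGaussian.memLp_dual m (L.comp Z) 1 (by simp)).integrable le_rfl, ?_⟩
    have := ProbabilityTheory.IsGaussian.integral_dual (μ := m) (L.comp Z)
    rw [hm, map_zero] at this
    exact this
  have hsq (Z : W →L[ℝ] E) : Integrable (fun w => ‖Z w‖ ^ 2) m := by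
    refine ((integrable_one_add_norm_pow m 2).const_mul (‖Z‖ ^ 2)).mono' (by fun_prop)
      (.of_forall fun w => ?_)
    rw [norm_of_nonneg (by positivity), ← mul_pow]
    refine pow_le_pow_left₀ (norm_nonneg _) ((Z.le_opNorm w).trans ?_) 2
    gcongr
    linarith
  set κ : (W →L[ℝ] E) → ℝ := fun Z => ‖Z‖ + ‖Z‖ ^ 2 + ∫ w, ‖Z w‖ ^ 2 ∂m with hκ
  have hM (Z : W →L[ℝ] E) : 0 ≤ ∫ w, ‖Z w‖ ^ 2 ∂m := integral_nonneg fun w => by positivity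
  have hκ0 (Z : W →L[ℝ] E) : 0 ≤ κ Z := by have := hM Z; positivity
  have hκle (Z : W →L[ℝ] E) (w : W) :
      ‖Z w‖ + ‖Z w‖ ^ 2 + ∫ w, ‖Z w‖ ^ 2 ∂m ≤ κ Z * (1 + ‖w‖) ^ 2 := by
    have h1 : ‖Z w‖ ≤ ‖Z‖ * ‖w‖ := Z.le_opNorm w
    have h2 : ‖Z w‖ ^ 2 ≤ ‖Z‖ ^ 2 * ‖w‖ ^ 2 := by
      rw [← mul_pow]; exact pow_le_pow_left₀ (norm_nonneg _) h1 2
    have hw := norm_nonneg w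
    have h3 : ‖w‖ ≤ (1 + ‖w‖) ^ 2 := by nlinarith
    have h4 : ‖w‖ ^ 2 ≤ (1 + ‖w‖) ^ 2 := by nlinarith
    have h5 : 1 ≤ (1 + ‖w‖) ^ 2 := by nlinarith
    have k1 := mul_le_mul_of_nonneg_left h3 (norm_nonneg Z)
    have k2 := mul_le_mul_of_nonneg_left h4 (sq_nonneg ‖Z‖)
    have k3 := mul_le_mul_of_nonneg_left h5 (hM Z)
    simp only [hκ, add_mul]
    linarith
  clear_value κ
  set T : W → ℝ := fun w => (κ X + κ Y) * (1 + ‖w‖) ^ 2 with hT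
  have hT0 (w : W) : 0 ≤ T w := mul_nonneg (add_nonneg (hκ0 X) (hκ0 Y)) (by positivity)
  have hTX (w : W) : ‖X w‖ + ‖X w‖ ^ 2 + ∫ w, ‖X w‖ ^ 2 ∂m ≤ T w :=
    (hκle X w).trans (mul_le_mul_of_nonneg_right (by linarith [hκ0 Y]) (by positivity))
  have hTY (w : W) : ‖Y w‖ + ‖Y w‖ ^ 2 + ∫ w, ‖Y w‖ ^ 2 ∂m ≤ T w :=
    (hκle Y w).trans (mul_le_mul_of_nonneg_right (by linarith [hκ0 X]) (by positivity))
  have hTp (k : ℕ) : Integrable (fun w => T w ^ k) m := by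
    simp only [hT, mul_pow, ← pow_mul]
    exact (integrable_one_add_norm_pow m (2 * k)).const_mul _
  have hTint : Integrable (fun w => 6 * T w ^ 2 + 2 * T w ^ 3) m :=
    ((hTp 2).const_mul 6).add ((hTp 3).const_mul 2)
  refine ⟨K * ∫ w, (6 * T w ^ 2 + 2 * T w ^ 3) ∂m, mul_nonneg hB.nonneg
    (integral_nonneg fun w => by have := hT0 w; positivity), fun δ hδ hδ1 f g hf hg => ?_⟩
  obtain ⟨p, hp⟩ := hf.exists_linear_approx_mean hδ hδ1 m X (hcent X) (hsq X)
  obtain ⟨q, hq⟩ := hg.exists_linear_approx_mean hδ hδ1 m Y (hcent Y) (hsq Y)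
  have hfX : Measurable fun w => f (X w) := hf.measurable.comp X.continuous.measurable
  have hgY : Measurable fun w => g (Y w) := hg.measurable.comp Y.continuous.measurable
  have hfi := integrable_of_mem_Icc (m := m) hfX fun w => hf.mem _
  have hgi := integrable_of_mem_Icc (m := m) hgY fun w => hg.mem _
  have hu := integral_mem_Icc (m := m) hfX fun w => hf.mem _
  have hv := integral_mem_Icc (m := m) hgY fun w => hg.mem _
  set u := ∫ w, f (X w) ∂m with hudef
  set v := ∫ w, g (Y w) ∂m with hvdef
  obtain ⟨d₁, d₂, c₁, c₂, c₃, h₁, h₁K, h₃, h₃K, h₂K, hdisc, hexp⟩ := hB.expansion u hu v hv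
  have hpt (w : W) : B u v + d₁ * (f (X w) - u) + d₂ * (g (Y w) - v)
      + (c₁ * p (X w) ^ 2 + c₂ * (p (X w) * q (Y w)) + c₃ * q (Y w) ^ 2)
      - K * δ ^ 3 * (6 * T w ^ 2 + 2 * T w ^ 3) ≤ B (f (X w)) (g (Y w)) := by
    have e1 := hexp _ (hf.mem (X w)) _ (hg.mem (Y w))
    obtain ⟨px, pp, pf⟩ := hp w
    obtain ⟨qx, qq, qg⟩ := hq w
    have hδT := mul_le_mul_of_nonneg_left (hTX w) hδ
    have hδT' := mul_le_mul_of_nonneg_left (hTY w) hδ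
    have hδδT := mul_le_mul_of_nonneg_left (hTX w) (sq_nonneg δ)
    have hδδT' := mul_le_mul_of_nonneg_left (hTY w) (sq_nonneg δ)
    have e2 := quadratic_expansion_stability (c₁ := c₁) (c₂ := c₂) (c₃ := c₃) hδ (hT0 w)
      ((abs_of_nonneg h₁).trans_le h₁K) h₂K ((abs_of_nonneg h₃).trans_le h₃K)
      (px.trans hδδT) (qx.trans hδδT') (pf.trans hδT) (qg.trans hδT') (pp.trans hδT)
      (qq.trans hδT')
    linarith
  have i₁ : Integrable (fun w => d₁ * (f (X w) - u)) m := (hfi.sub (integrable_const u)).const_mul d₁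
  have i₂ : Integrable (fun w => d₂ * (g (Y w) - v)) m := (hgi.sub (integrable_const v)).const_mul d₂
  have i₃ : Integrable (fun w => c₁ * p (X w) ^ 2) m := by
    simpa only [sq] using (integrable_clm_mul_clm m X X p p).const_mul c₁
  have i₄ : Integrable (fun w => c₂ * (p (X w) * q (Y w))) m :=
    (integrable_clm_mul_clm m X Y p q).const_mul c₂
  have i₅ : Integrable (fun w => c₃ * q (Y w) ^ 2) m := by
    simpa only [sq] using (integrable_clm_mul_clm m Y Y q q).const_mul c₃
  have i₆ : Integrable (fun w => K * δ ^ 3 * (6 * T w ^ 2 + 2 * T w ^ 3)) m := hTint.const_mul _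
  have i₁₂ : Integrable (fun w => B u v + d₁ * (f (X w) - u)) m := (integrable_const _).add i₁
  have i₁₂' : Integrable (fun w => B u v + d₁ * (f (X w) - u) + d₂ * (g (Y w) - v)) m :=
    i₁₂.add i₂
  have i₃₄ : Integrable (fun w => c₁ * p (X w) ^ 2 + c₂ * (p (X w) * q (Y w))) m := i₃.add i₄
  have i₃₅ : Integrable (fun w => c₁ * p (X w) ^ 2 + c₂ * (p (X w) * q (Y w))
    + c₃ * q (Y w) ^ 2) m := i₃₄.add i₅
  have iall : Integrable (fun w => B u v + d₁ * (f (X w) - u) + d₂ * (g (Y w) - v)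
      + (c₁ * p (X w) ^ 2 + c₂ * (p (X w) * q (Y w)) + c₃ * q (Y w) ^ 2)) m := i₁₂'.add i₃₅
  have iB : Integrable (fun w => B (f (X w)) (g (Y w))) m :=
    Integrable.of_bound (hB.measurable.comp (hfX.prodMk hgY)).aestronglyMeasurable K
      (.of_forall fun w => hB.bound _ (hf.mem _) _ (hg.mem _))
  have z₁ : ∫ w, d₁ * (f (X w) - u) ∂m = 0 := by
    rw [integral_const_mul, integral_sub hfi (integrable_const _)]
    simp [← hudef]
  have z₂ : ∫ w, d₂ * (g (Y w) - v) ∂m = 0 := by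
    rw [integral_const_mul, integral_sub hgi (integrable_const _)]
    simp [← hvdef]
  have hmono := integral_mono (iall.sub i₆) iB hpt
  have hval : ∫ w, (B u v + d₁ * (f (X w) - u) + d₂ * (g (Y w) - v)
      + (c₁ * p (X w) ^ 2 + c₂ * (p (X w) * q (Y w)) + c₃ * q (Y w) ^ 2)
      - K * δ ^ 3 * (6 * T w ^ 2 + 2 * T w ^ 3)) ∂m
      = B u v + (c₁ * (∫ w, p (X w) ^ 2 ∂m) + c₂ * (∫ w, p (X w) * q (Y w) ∂m)
        + c₃ * ∫ w, q (Y w) ^ 2 ∂m) - K * δ ^ 3 * ∫ w, (6 * T w ^ 2 + 2 * T w ^ 3) ∂m := by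
    rw [integral_sub iall i₆, integral_add i₁₂' i₃₅, integral_add i₁₂ i₂,
      integral_add (integrable_const _) i₁, z₁, z₂, integral_add i₃₄ i₅, integral_add i₃ i₄]
    simp only [integral_const_mul, integral_const, probReal_univ, one_smul, add_zero]
  have hquad := quadratic_correlation_nonneg (integral_nonneg fun w => sq_nonneg (p (X w)))
    (integral_nonneg fun w => sq_nonneg (q (Y w))) h₁ h₃ hdisc (hXY p q)
  have hmono' := hval.symm.trans_le hmono
  linarith

lemma measurePreserving_cos_smul_add_sin_smul [SecondCountableTopology W] [CompleteSpace W]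
    (hm : ∫ w, w ∂m = 0) (θ : ℝ) :
    MeasurePreserving (fun z : W × W => cos θ • z.1 + sin θ • z.2) (m.prod m) m := by
  have h : MeasurePreserving (ContinuousLinearMap.rotation (E := W) θ) (m.prod m) (m.prod m) :=
    ⟨by fun_prop, ProbabilityTheory.IsGaussian.map_rotation_eq_self hm θ⟩
  convert! measurePreserving_fst.comp h using 1

/-- The inequality for smooth functions, with the error accumulated over `2 ^ k` increments. -/
lemma le_integral_add_two_pow_mul [SecondCountableTopology W] [CompleteSpace W]
    [MeasurableSpace E] [BorelSpace E] [SecondCountableTopology E]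
    (hB : IsCorrConvexWith K ρ a b B) (hm : ∫ w, w ∂m = 0)
    {C : ℝ} (hC : ∀ δ, 0 ≤ δ → δ ≤ 1 → ∀ f g : E → ℝ, IsSmoothWith a b δ f → IsSmoothWith a b δ g →
      B (∫ w, f (X w) ∂m) (∫ w, g (Y w) ∂m) ≤ (∫ w, B (f (X w)) (g (Y w)) ∂m) + C * δ ^ 3)
    (k : ℕ) {η : ℝ} (hη : 0 ≤ η) (hη1 : η ≤ 1) {f g : E → ℝ} (hf : IsSmoothWith a b (√2 ^ k * η) f)
    (hg : IsSmoothWith a b (√2 ^ k * η) g) :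
    B (∫ w, f (X w) ∂m) (∫ w, g (Y w) ∂m) ≤
      (∫ w, B (f (X w)) (g (Y w)) ∂m) + 2 ^ k * (C * η ^ 3) := by
  induction k generalizing f g with
  | zero => simpa using hC η hη hη1 f g (by simpa using hf) (by simpa using hg)
  | succ k ih =>
    set c : ℝ := √2 / 2 with hcdef
    have hc : 0 ≤ c := by positivity
    have hcη : c * (√2 ^ (k + 1) * η) = √2 ^ k * η := by
      rw [hcdef, pow_succ]
      linear_combination (√2 ^ k * η / 2) * sq_sqrt (show (0 : ℝ) ≤ 2 by norm_num)
    have hrot : MeasurePreserving (fun z : W × W => c • (z.1 + z.2)) (m.prod m) m := by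
      simpa only [cos_pi_div_four, sin_pi_div_four, ← smul_add] using
        measurePreserving_cos_smul_add_sin_smul m hm (π / 4)
    have hsplit {F : W → ℝ} (hF : Measurable F) {l r : ℝ} (hF' : ∀ w, F w ∈ Set.Icc l r) :
        ∫ w, F w ∂m = ∫ w, ∫ w', F (c • (w + w')) ∂m ∂m := by
      conv_lhs => rw [← hrot.map_eq]
      rw [integral_map_of_stronglyMeasurable hrot.measurable hF.stronglyMeasurable]
      exact integral_prod _ (integrable_of_mem_Icc (hF.comp hrot.measurable) fun z => hF' _)
    have hfX : Measurable fun w => f (X w) := hf.measurable.comp X.continuous.measurable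
    have hgY : Measurable fun w => g (Y w) := hg.measurable.comp Y.continuous.measurable
    have hBm : Measurable fun w => B (f (X w)) (g (Y w)) := hB.measurable.comp (hfX.prodMk hgY)
    have hBb (w : W) : B (f (X w)) (g (Y w)) ∈ Set.Icc (-K) K :=
      abs_le.1 (hB.bound _ (hf.mem _) _ (hg.mem _))
    have hf' := hf.integral_comp_smul_add hc m X.continuous.measurable
    have hg' := hg.integral_comp_smul_add hc m Y.continuous.measurable
    rw [hcη] at hf' hg'
    have houter := ih hf' hg'
    have hinner (w : W) :
        B (∫ w', f (c • (X w + X w')) ∂m) (∫ w', g (c • (Y w + Y w')) ∂m) ≤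
        (∫ w', B (f (c • (X w + X w'))) (g (c • (Y w + Y w'))) ∂m) + 2 ^ k * (C * η ^ 3) :=
      ih (hcη ▸ hf.comp_smul_add hc (X w)) (hcη ▸ hg.comp_smul_add hc (Y w))
    rw [hsplit hfX fun w => hf.mem _, hsplit hgY fun w => hg.mem _, hsplit hBm hBb]
    simp only [map_smul, map_add]
    have hint : Integrable (fun w => ∫ w', B (f (c • (X w + X w'))) (g (c • (Y w + Y w'))) ∂m) m := by
      have := (integrable_of_mem_Icc (m := m.prod m) (hBm.comp hrot.measurable)
        fun z => hBb _).integral_prod_left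
      simpa using this
    have hint' : Integrable (fun w =>
        B (∫ w', f (c • (X w + X w')) ∂m) (∫ w', g (c • (Y w + Y w')) ∂m)) m :=
      integrable_of_mem_Icc (hB.measurable.comp
        ((hf'.measurable.comp X.continuous.measurable).prodMk
          (hg'.measurable.comp Y.continuous.measurable)))
        fun w => abs_le.1 (hB.bound _ (hf'.mem _) _ (hg'.mem _))
    have hmono := integral_mono hint' (hint.add (integrable_const (2 ^ k * (C * η ^ 3)))) hinner
    simp only [Pi.add_apply] at hmono
    rw [integral_add hint (integrable_const _)] at hmono
    simp only [integral_const, probReal_univ, one_smul] at hmono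
    rw [pow_succ]
    linarith

theorem IsCorrConvexWith.le_integral_of_isSmoothWith [SecondCountableTopology W] [CompleteSpace W]
    [MeasurableSpace E] [BorelSpace E] [SecondCountableTopology E]
    (hB : IsCorrConvexWith K ρ a b B) (hm : ∫ w, w ∂m = 0) (hXY : CorrelationLE ρ m X Y)
    {δ : ℝ} (hδ : 0 ≤ δ) {f g : E → ℝ} (hf : IsSmoothWith a b δ f) (hg : IsSmoothWith a b δ g) :
    B (∫ w, f (X w) ∂m) (∫ w, g (Y w) ∂m) ≤ ∫ w, B (f (X w)) (g (Y w)) ∂m := by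
  obtain ⟨C, -, hC⟩ := exists_forall_le_integral_add_mul_cube m X Y hB hm hXY
  have hsqrt : 1 < √2 := by
    rw [lt_sqrt (by norm_num)]; norm_num
  have hlim : Filter.Tendsto (fun k : ℕ => δ * (√2)⁻¹ ^ k) Filter.atTop (nhds 0) := by
    simpa using (tendsto_pow_atTop_nhds_zero_of_lt_one (by positivity)
      (inv_lt_one_of_one_lt₀ hsqrt)).const_mul δ
  have hlim' : Filter.Tendsto (fun k : ℕ => (∫ w, B (f (X w)) (g (Y w)) ∂m)
      + C * δ ^ 2 * (δ * (√2)⁻¹ ^ k)) Filter.atTop (nhds (∫ w, B (f (X w)) (g (Y w)) ∂m)) := by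
    simpa using (hlim.const_mul (C * δ ^ 2)).const_add (∫ w, B (f (X w)) (g (Y w)) ∂m)
  refine ge_of_tendsto hlim' ?_
  filter_upwards [hlim.eventually_le_const one_pos] with k hk
  have hδk : √2 ^ k * (δ * (√2)⁻¹ ^ k) = δ := by
    rw [inv_pow]; field_simp
  refine (le_integral_add_two_pow_mul m X Y hB hm hC k (by positivity) hk
    (by rwa [hδk]) (by rwa [hδk])).trans_eq ?_
  have h2 : (2 : ℝ) ^ k * ((√2)⁻¹ ^ k) ^ 2 = 1 := by
    rw [← pow_mul, mul_comm k 2, pow_mul, inv_pow, sq_sqrt (by norm_num), ← mul_pow]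
    norm_num
  linear_combination (C * δ ^ 3 * (√2)⁻¹ ^ k) * h2

end CorrelatedGaussian

lemma integrable_exp_neg_norm_sq_div_two (n : ℕ) :
    Integrable fun x : EuclideanSpace ℝ (Fin n) =>
      (2 * π) ^ (-(n : ℝ) / 2) * Real.exp (-‖x‖ ^ 2 / 2) := by
  refine Integrable.const_mul (Integrable.of_integral_ne_zero ?_) _
  have h := GaussianFourier.integral_rexp_neg_mul_sq_norm (V := EuclideanSpace ℝ (Fin n))
    (b := 1 / 2) (by norm_num)
  have e : (fun x : EuclideanSpace ℝ (Fin n) => rexp (-‖x‖ ^ 2 / 2))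
      = fun x => rexp (-(1 / 2) * ‖x‖ ^ 2) := by
    ext x; congr 1; ring
  rw [e, h]
  positivity

theorem gaussianMeasure_eq_stdGaussian (n : ℕ) :
    gaussianMeasure n = ProbabilityTheory.stdGaussian (EuclideanSpace ℝ (Fin n)) := by
  have : IsFiniteMeasure (gaussianMeasure n) :=
    isFiniteMeasure_withDensity_ofReal (integrable_exp_neg_norm_sq_div_two n).2
  refine Measure.ext_of_charFun (funext fun w => ?_)
  rw [ProbabilityTheory.charFun_stdGaussian, charFun_apply, gaussianMeasure,
    integral_withDensity_eq_integral_toReal_smul (by fun_prop) (by simp)]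
  have h := GaussianFourier.integral_cexp_neg_mul_sq_norm_add (V := EuclideanSpace ℝ (Fin n))
    (b := 1 / 2) (by norm_num) Complex.I w
  have hpi : ((2 * π : ℝ) : ℂ) ≠ 0 := by exact_mod_cast (by positivity : (2 * π : ℝ) ≠ 0)
  calc _ = ∫ v : EuclideanSpace ℝ (Fin n), ((2 * π : ℝ) : ℂ) ^ (-(n : ℂ) / 2) *
        Complex.exp (-(1 / 2) * ‖v‖ ^ 2 + Complex.I * (inner ℝ w v : ℝ)) := by
        refine integral_congr_ae (.of_forall fun v => ?_)
        simp only
        rw [ENNReal.toReal_ofReal (by positivity), Complex.real_smul, Complex.exp_add,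
          real_inner_comm w v, Complex.ofReal_mul, Complex.ofReal_cpow (by positivity)]
        push_cast
        ring_nf
    _ = _ := by
        rw [integral_const_mul, h, ← mul_assoc]
        have : (π : ℂ) / (1 / 2) = ((2 * π : ℝ) : ℂ) := by push_cast; ring
        rw [this, ← Complex.cpow_add _ _ hpi, finrank_euclideanSpace_fin,
          show -(n : ℂ) / 2 + (n : ℂ) / 2 = 0 by ring, Complex.cpow_zero, Complex.I_sq]
        ring_nf

section Correlation

variable {E : Type*} [NormedAddCommGroup E] [NormedSpace ℝ E] [MeasurableSpace E] [BorelSpace E]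
  (γ : Measure E) [ProbabilityTheory.IsGaussian γ]

lemma sq_integral_clm_mul_clm_le (p q : StrongDual ℝ E) :
    (∫ x, p x * q x ∂γ) ^ 2 ≤ (∫ x, p x ^ 2 ∂γ) * ∫ x, q x ^ 2 ∂γ := by
  have hi (p q : StrongDual ℝ E) : Integrable (fun x => p x * q x) γ :=
    integrable_clm_mul_clm γ (.id ℝ E) (.id ℝ E) p q
  have hpp : Integrable (fun x => p x ^ 2) γ := by simpa only [sq] using hi p p
  have hqq : Integrable (fun x => q x ^ 2) γ := by simpa only [sq] using hi q q
  have h (s : ℝ) : 0 ≤ (∫ x, q x ^ 2 ∂γ) * (s * s) + (2 * ∫ x, p x * q x ∂γ) * s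
      + ∫ x, p x ^ 2 ∂γ := by
    have h0 : 0 ≤ ∫ x, (s ^ 2 * q x ^ 2 + 2 * s * (p x * q x) + p x ^ 2) ∂γ :=
      integral_nonneg fun x => by
        rw [Pi.zero_apply]
        nlinarith [sq_nonneg (s * q x + p x)]
    have h1 : Integrable (fun x => s ^ 2 * q x ^ 2) γ := hqq.const_mul _
    have h2 : Integrable (fun x => 2 * s * (p x * q x)) γ := (hi p q).const_mul _
    have h3 : Integrable (fun x => s ^ 2 * q x ^ 2 + 2 * s * (p x * q x)) γ := h1.add h2
    rw [integral_add h3 hpp, integral_add h1 h2, integral_const_mul, integral_const_mul] at h0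
    linarith
  have := discrim_le_zero h
  rw [discrim] at this
  linarith

variable [SecondCountableTopology E] [CompleteSpace E]

theorem correlationLE_cos_fst_add_sin_snd (hγ : ∫ x, x ∂γ = 0) (θ : ℝ) :
    CorrelationLE (cos θ) (γ.prod γ)
      (cos θ • ContinuousLinearMap.fst ℝ E E + sin θ • ContinuousLinearMap.snd ℝ E E)
      (ContinuousLinearMap.fst ℝ E E) := by
  intro p q
  have hX : ∫ w, p (cos θ • w.1 + sin θ • w.2) ^ 2 ∂(γ.prod γ) = ∫ x, p x ^ 2 ∂γ :=
    (measurePreserving_cos_smul_add_sin_smul γ hγ θ).hasLaw.integral_comp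
      (f := fun x => p x ^ 2) (by fun_prop)
  have hY : ∫ w : E × E, q w.1 ^ 2 ∂(γ.prod γ) = ∫ x, q x ^ 2 ∂γ := by
    simp [integral_fun_fst (μ := γ) (ν := γ) (fun x => q x ^ 2)]
  have hq : ∫ x, q x ∂γ = 0 := by
    rw [q.integral_comp_comm (φ := fun x => x) ProbabilityTheory.IsGaussian.integrable_id, hγ,
      map_zero]
  have hXY : ∫ w, p (cos θ • w.1 + sin θ • w.2) * q w.1 ∂(γ.prod γ)
      = cos θ * ∫ x, p x * q x ∂γ := by
    have h1 : Integrable (fun w : E × E => cos θ * (p w.1 * q w.1)) (γ.prod γ) :=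
      (integrable_clm_mul_clm (γ.prod γ) (.fst ℝ E E) (.fst ℝ E E) p q).const_mul _
    have h2 : Integrable (fun w : E × E => sin θ * (q w.1 * p w.2)) (γ.prod γ) :=
      (integrable_clm_mul_clm (γ.prod γ) (.fst ℝ E E) (.snd ℝ E E) q p).const_mul _
    calc _ = ∫ w : E × E, (cos θ * (p w.1 * q w.1) + sin θ * (q w.1 * p w.2)) ∂(γ.prod γ) := by
          congr with w
          simp only [map_add, map_smul, smul_eq_mul]
          ring
      _ = _ := by
          rw [integral_add h1 h2, integral_const_mul, integral_const_mul,
            integral_prod_mul (fun x => q x) (fun x => p x), hq,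
            integral_fun_fst (μ := γ) (ν := γ) (fun x => p x * q x)]
          simp
  simp only [add_apply, smul_apply, ContinuousLinearMap.coe_fst',
    ContinuousLinearMap.coe_snd']
  rw [hX, hY, hXY, mul_pow]
  exact mul_le_mul_of_nonneg_left (sq_integral_clm_mul_clm_le γ p q) (sq_nonneg _)

end Correlation

section Approximation

lemma IsSmoothWith.mono {E : Type*} [NormedAddCommGroup E] [NormedSpace ℝ E] [MeasurableSpace E]
    {a b δ δ' : ℝ} {f : E → ℝ} (hf : IsSmoothWith a b δ f) (hδ : 0 ≤ δ) (h : δ ≤ δ') :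
    IsSmoothWith a b δ' f := by
  obtain ⟨p, hp, hpb, hpt⟩ := hf.exists_approx
  refine ⟨hf.measurable, hf.mem, p, hp, fun x => (hpb x).trans h, fun x z => (hpt x z).trans ?_⟩
  exact mul_le_mul_of_nonneg_right (pow_le_pow_left₀ hδ h 2) (sq_nonneg _)

variable {E : Type*} [NormedAddCommGroup E] [InnerProductSpace ℝ E] [FiniteDimensional ℝ E]
  [MeasurableSpace E] [BorelSpace E]

lemma exists_isSmoothWith_of_hasCompactSupport {a b : ℝ} {h : E → ℝ} (hh : ContDiff ℝ 2 h)
    (hc : HasCompactSupport h) (hab : ∀ x, a + h x ∈ Set.Icc a b) :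
    ∃ δ, 0 ≤ δ ∧ IsSmoothWith a b δ fun x => a + h x := by
  have hh' : ContDiff ℝ 1 (fderiv ℝ h) := hh.fderiv_right (by norm_num)
  obtain ⟨C, hC⟩ := (hc.fderiv ℝ).exists_bound_of_continuous hh'.continuous
  obtain ⟨L, hL⟩ := hh'.lipschitzWith_of_hasCompactSupport (hc.fderiv ℝ) one_ne_zero
  have hd : 1 ≤ 1 + |C| + L := by linarith [abs_nonneg C, L.coe_nonneg]
  refine ⟨1 + |C| + L, zero_le_one.trans hd, ?_, hab, fderiv ℝ h, hh'.continuous.stronglyMeasurable,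
    fun x => ?_, fun x z => ?_⟩
  · exact (hh.continuous.const_add a |>.measurable :)
  · linarith [hC x, le_abs_self C, L.coe_nonneg]
  · have key := (convex_closedBall x ‖z‖).norm_image_sub_le_of_norm_fderiv_le' (f := h) (𝕜 := ℝ)
      (φ := fderiv ℝ h x) (C := L * ‖z‖) (x := x) (y := x + z)
      (fun y _ => hh.differentiable (by norm_num) y) (fun y hy => ?_) (by simp) (by simp)
    · rw [add_sub_cancel_left, norm_eq_abs] at key
      calc _ = |h (x + z) - h x - fderiv ℝ h x z| := by ring_nf
        _ ≤ L * ‖z‖ ^ 2 := by linarith [key]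
        _ ≤ _ := by
          gcongr
          nlinarith [abs_nonneg C, L.coe_nonneg]
    · rw [← dist_eq_norm]
      exact (hL.dist_le_mul y x).trans (mul_le_mul_of_nonneg_left hy L.coe_nonneg)

open Convolution in
/-- A measurable function with values in `[a, b]` is an almost everywhere limit of smooth ones. -/
theorem exists_isSmoothWith_tendsto_ae {a b : ℝ} {F : E → ℝ} (hF : Measurable F)
    (hab : ∀ x, F x ∈ Set.Icc a b) :
    ∃ f : ℕ → E → ℝ, (∀ k, ∃ δ, 0 ≤ δ ∧ IsSmoothWith a b δ (f k)) ∧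
      ∀ᵐ x, Filter.Tendsto (f · x) Filter.atTop (nhds (F x)) := by
  let φ (k : ℕ) : ContDiffBump (0 : E) :=
    ⟨1 / ((k : ℝ) + 1) / 2, 1 / ((k : ℝ) + 1), by positivity, half_lt_self (by positivity)⟩
  let g (k : ℕ) : E → ℝ := (Metric.closedBall 0 (k : ℝ)).indicator fun x => F x - a
  have hg (k : ℕ) : Measurable (g k) := (hF.sub_const a).indicator measurableSet_closedBall
  have hgmem (k : ℕ) (x : E) : g k x ∈ Set.Icc 0 (b - a) := by
    have := hab x
    by_cases hx : x ∈ Metric.closedBall (0 : E) (k : ℝ)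
    · simp only [g, Set.indicator_of_mem hx]
      exact ⟨by linarith [this.1], by linarith [this.2]⟩
    · simp only [g, Set.indicator_of_notMem hx]
      exact ⟨le_rfl, by linarith [this.1, this.2]⟩
  have hloc {G : E → ℝ} (hG : Measurable G) (h : ∀ x, G x ∈ Set.Icc 0 (b - a)) :
      LocallyIntegrable G :=
    (locallyIntegrable_const (b - a)).mono hG.aestronglyMeasurable (.of_forall fun x => by
      rw [norm_of_nonneg (h x).1]
      exact (h x).2.trans (le_abs_self _))
  have hgc (k : ℕ) : HasCompactSupport (g k) :=
    HasCompactSupport.intro (isCompact_closedBall 0 (k : ℝ)) fun x hx =>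
      Set.indicator_of_notMem hx _
  refine ⟨fun k x => a + ((φ k).normed volume ⋆[ContinuousLinearMap.lsmul ℝ ℝ, volume] g k) x,
    fun k => exists_isSmoothWith_of_hasCompactSupport ?_ ?_ fun x => ?_, ?_⟩
  · exact (φ k).hasCompactSupport_normed.contDiff_convolution_left (n := 2) _ (φ k).contDiff_normed
      (hloc (hg k) (hgmem k))
  · exact (φ k).hasCompactSupport_normed.convolution _ (hgc k)
  · have hi : Integrable (fun y => (φ k).normed volume y * (b - a)) :=
      (φ k).integrable_normed.mul_const _
    have h0 : 0 ≤ ∫ y, (φ k).normed volume y * g k (x - y) :=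
      integral_nonneg fun y => mul_nonneg ((φ k).nonneg_normed y) (hgmem k _).1
    have h1 : ∫ y, (φ k).normed volume y * g k (x - y)
        ≤ ∫ y, (φ k).normed volume y * (b - a) :=
      integral_mono_of_nonneg
        (.of_forall fun y => mul_nonneg ((φ k).nonneg_normed y) (hgmem k _).1) hi
        (.of_forall fun y => mul_le_mul_of_nonneg_left (hgmem k _).2 ((φ k).nonneg_normed y))
    rw [integral_mul_const, (φ k).integral_normed] at h1
    simp only [convolution_def, ContinuousLinearMap.lsmul_apply, smul_eq_mul]
    exact ⟨by linarith, by linarith⟩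
  · have hlim := ContDiffBump.ae_convolution_tendsto_right_of_locallyIntegrable (φ := φ) (K := 2)
      (μ := (volume : Measure E)) (l := Filter.atTop) tendsto_one_div_add_atTop_nhds_zero_nat
      (.of_forall fun k => by simp only [φ]; linarith) (g := fun x => F x - a)
      (hloc (hF.sub_const a) fun x => by simpa using hab x)
    filter_upwards [hlim] with x hx
    have hx' := (hx.const_add a)
    rw [add_sub_cancel] at hx'
    refine hx'.congr' ?_
    obtain ⟨N, hN⟩ := exists_nat_ge (‖x‖ + 1)
    filter_upwards [Filter.eventually_ge_atTop N] with k hk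
    simp only [convolution_def]
    congr 2
    ext y
    by_cases hy : y ∈ Function.support ((φ k).normed volume)
    · rw [ContDiffBump.support_normed_eq, mem_ball_zero_iff] at hy
      have hr : (φ k).rOut ≤ 1 := by
        simp only [φ]
        rw [div_le_one (by positivity)]
        simp
      have : x - y ∈ Metric.closedBall (0 : E) (k : ℝ) := by
        rw [mem_closedBall_zero_iff]
        have : (N : ℝ) ≤ k := by exact_mod_cast hk
        linarith [norm_sub_le x y]
      simp only [g, Set.indicator_of_mem this]
    · rw [Function.notMem_support] at hy
      simp [hy]

end Approximation

lemma le_integral_of_tendsto_ae {Ω : Type*} [MeasurableSpace Ω] {m : Measure Ω}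
    [IsProbabilityMeasure m] {K a b : ℝ} {B : ℝ → ℝ → ℝ}
    (hBm : Measurable (Function.uncurry B))
    (hBb : ∀ u ∈ Set.Icc a b, ∀ v ∈ Set.Icc a b, |B u v| ≤ K)
    (hBc : ContinuousOn (Function.uncurry B) (Set.Icc a b ×ˢ Set.Icc a b))
    {f g : ℕ → Ω → ℝ} {F G : Ω → ℝ} (hf : ∀ k, Measurable (f k)) (hg : ∀ k, Measurable (g k))
    (hfab : ∀ k x, f k x ∈ Set.Icc a b) (hgab : ∀ k x, g k x ∈ Set.Icc a b)
    (hfF : ∀ᵐ x ∂m, Filter.Tendsto (f · x) Filter.atTop (nhds (F x)))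
    (hgG : ∀ᵐ x ∂m, Filter.Tendsto (g · x) Filter.atTop (nhds (G x)))
    (h : ∀ k, B (∫ x, f k x ∂m) (∫ x, g k x ∂m) ≤ ∫ x, B (f k x) (g k x) ∂m) :
    B (∫ x, F x ∂m) (∫ x, G x ∂m) ≤ ∫ x, B (F x) (G x) ∂m := by
  have hlim {f : ℕ → Ω → ℝ} {F : Ω → ℝ} (hf : ∀ k, Measurable (f k))
      (hfab : ∀ k x, f k x ∈ Set.Icc a b)
      (hfF : ∀ᵐ x ∂m, Filter.Tendsto (f · x) Filter.atTop (nhds (F x))) :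
      Filter.Tendsto (fun k => ∫ x, f k x ∂m) Filter.atTop (nhds (∫ x, F x ∂m)) :=
    tendsto_integral_of_dominated_convergence (fun _ => max |a| |b|)
      (fun k => (hf k).aestronglyMeasurable) (integrable_const _)
      (fun k => .of_forall fun x => abs_le_max_abs_abs (hfab k x).1 (hfab k x).2) hfF
  have hBlim {u v : ℕ → ℝ} {u₀ v₀ : ℝ} (hu : Filter.Tendsto u Filter.atTop (nhds u₀))
      (hv : Filter.Tendsto v Filter.atTop (nhds v₀)) (hua : ∀ k, u k ∈ Set.Icc a b)
      (hva : ∀ k, v k ∈ Set.Icc a b) :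
      Filter.Tendsto (fun k => B (u k) (v k)) Filter.atTop (nhds (B u₀ v₀)) := by
    have hu₀ := isClosed_Icc.mem_of_tendsto hu (.of_forall hua)
    have hv₀ := isClosed_Icc.mem_of_tendsto hv (.of_forall hva)
    exact (hBc (u₀, v₀) ⟨hu₀, hv₀⟩).tendsto.comp (tendsto_nhdsWithin_iff.2
      ⟨hu.prodMk_nhds hv, .of_forall fun k => ⟨hua k, hva k⟩⟩)
  refine le_of_tendsto_of_tendsto' (hBlim (hlim hf hfab hfF) (hlim hg hgab hgG)
    (fun k => integral_mem_Icc (hf k) (hfab k)) fun k => integral_mem_Icc (hg k) (hgab k)) ?_ h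
  refine tendsto_integral_of_dominated_convergence (fun _ => K)
    (fun k => (hBm.comp ((hf k).prodMk (hg k))).aestronglyMeasurable) (integrable_const _)
    (fun k => .of_forall fun x => hBb _ (hfab k x) _ (hgab k x)) ?_
  filter_upwards [hfF, hgG] with x hx hx'
  exact hBlim hx hx' (hfab · x) (hgab · x)

/-- Gaussian correlation inequality for a pair of functions of two `cos θ`-correlated Gaussians. -/
theorem rpow_integral_mul_rpow_integral_le {E : Type*} [NormedAddCommGroup E]
    [InnerProductSpace ℝ E] [FiniteDimensional ℝ E] [MeasurableSpace E] [BorelSpace E]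
    (γ : Measure E) [ProbabilityTheory.IsGaussian γ] (hγ : ∫ x, x ∂γ = 0) (hγv : γ ≪ volume)
    {a b α β θ : ℝ} (ha : 0 < a) (hb : 0 < b) (hα : 1 ≤ α) (hβ : 0 ≤ β)
    (hθ : cos θ ^ 2 * (α * β) ≤ (α - 1) * (β + 1)) {F G : E → ℝ} (hF : Measurable F)
    (hG : Measurable G) (hFab : ∀ x, F x ∈ Set.Icc a b) (hGab : ∀ x, G x ∈ Set.Icc a b) :
    (∫ x, F x ∂γ) ^ α * (∫ x, G x ∂γ) ^ (-β) ≤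
      ∫ w, F (cos θ • w.1 + sin θ • w.2) ^ α * G w.1 ^ (-β) ∂(γ.prod γ) := by
  obtain ⟨K, hK⟩ := exists_isCorrConvexWith_rpow_mul_rpow ha hb hα hβ hθ
  obtain ⟨f, hf, hfF⟩ := exists_isSmoothWith_tendsto_ae hF hFab
  obtain ⟨g, hg, hgG⟩ := exists_isSmoothWith_tendsto_ae hG hGab
  choose δ hδ hf using hf
  choose ε hε hg using hg
  have hX := measurePreserving_cos_smul_add_sin_smul γ hγ θ
  have hY := measurePreserving_fst (μ := γ) (ν := γ)
  have hprod : ∫ w, w ∂(γ.prod γ) = 0 := by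
    have hi := ProbabilityTheory.IsGaussian.integrable_id (μ := γ.prod γ)
    refine Prod.ext ?_ ?_
    · rw [fst_integral (f := fun w => w) hi, integral_fun_fst (μ := γ) (ν := γ) fun x => x, hγ]
      simp
    · rw [snd_integral (f := fun w => w) hi, integral_fun_snd (μ := γ) (ν := γ) fun x => x, hγ]
      simp
  have hmain := le_integral_of_tendsto_ae (m := γ.prod γ) hK.measurable hK.bound ?_
    (f := fun k w => f k (cos θ • w.1 + sin θ • w.2)) (g := fun k w => g k w.1)
    (F := fun w => F (cos θ • w.1 + sin θ • w.2)) (G := fun w => G w.1)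
    (fun k => (hf k).measurable.comp hX.measurable) (fun k => (hg k).measurable.comp hY.measurable)
    (fun k w => (hf k).mem _) (fun k w => (hg k).mem _)
    (hX.quasiMeasurePreserving.ae (hγv.ae_le hfF)) (hY.quasiMeasurePreserving.ae (hγv.ae_le hgG))
    fun k => ?_
  · have hFX : ∫ w, F (cos θ • w.1 + sin θ • w.2) ∂(γ.prod γ) = ∫ x, F x ∂γ :=
      hX.hasLaw.integral_comp hF.aestronglyMeasurable
    have hGY : ∫ w, G w.1 ∂(γ.prod γ) = ∫ x, G x ∂γ :=
      hY.hasLaw.integral_comp hG.aestronglyMeasurable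
    rwa [hFX, hGY] at hmain
  · intro w hw
    have h1 : w.1 ≠ 0 := (ha.trans_le hw.1.1).ne'
    have h2 : w.2 ≠ 0 := (ha.trans_le hw.2.1).ne'
    exact ((continuousAt_fst.rpow_const (.inl h1)).mul
      (continuousAt_snd.rpow_const (.inl h2))).continuousWithinAt
  · exact hK.le_integral_of_isSmoothWith (γ.prod γ) _ _ hprod
      (correlationLE_cos_fst_add_sin_snd γ hγ θ) ((hδ k).trans (le_max_left (δ k) (ε k)))
      ((hf k).mono (hδ k) (le_max_left _ _)) ((hg k).mono (hε k) (le_max_right _ _))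

theorem reverse_hypercontractivity_OU (n : ℕ) (hn : 1 ≤ n) (t : ℝ) (ht : 0 ≤ t)
    (q₁ q₂ : ℝ) (hq₂ : 0 < q₂) (hq : q₂ ≤ q₁) (hq₁ : q₁ < 1)
    (hqt : q₂ - 1 = Real.exp (2 * t) * (q₁ - 1))
    (f : EuclideanSpace ℝ (Fin n) → ℝ) (hf : Measurable f)
    (a b : ℝ) (ha : 0 < a) (hab : ∀ x, a ≤ f x ∧ f x ≤ b) :
    (∫ x, f x ^ q₁ ∂(gaussianMeasure n)) ^ (1 / q₁) ≤
      (∫ x, OU n t f x ^ q₂ ∂(gaussianMeasure n)) ^ (1 / q₂) := by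
  have hγv : gaussianMeasure n ≪ volume := withDensity_absolutelyContinuous _ _
  have hγ : ∫ x, x ∂gaussianMeasure n = 0 := by
    rw [gaussianMeasure_eq_stdGaussian]
    exact ProbabilityTheory.integral_id_stdGaussian
  have : ProbabilityTheory.IsGaussian (gaussianMeasure n) := by
    rw [gaussianMeasure_eq_stdGaussian]
    infer_instance
  have hq₁pos : 0 < q₁ := hq₂.trans_le hq
  have hb : 0 < b := ha.trans_le ((hab 0).1.trans (hab 0).2)
  obtain ⟨θ, hcos, hsin⟩ : ∃ θ, cos θ = exp (-t) ∧ sin θ = √(1 - exp (-2 * t)) := by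
    refine ⟨arccos (exp (-t)), cos_arccos (by linarith [exp_pos (-t)])
      (exp_le_one_iff.2 (by linarith)), ?_⟩
    rw [sin_arccos, ← exp_nat_mul]
    ring_nf
  have hOU (x : EuclideanSpace ℝ (Fin n)) :
      OU n t f x = ∫ y, f (cos θ • x + sin θ • y) ∂gaussianMeasure n := by
    rw [OU, hcos, hsin]
  have hmeas : Measurable fun w : EuclideanSpace ℝ (Fin n) × EuclideanSpace ℝ (Fin n) =>
      f (cos θ • w.1 + sin θ • w.2) := hf.comp (by fun_prop)
  have hOUm : Measurable (OU n t f) := by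
    rw [funext hOU]
    exact hmeas.stronglyMeasurable.integral_prod_right'.measurable
  have hOUab (x : EuclideanSpace ℝ (Fin n)) : OU n t f x ∈ Set.Icc a b := by
    rw [hOU]
    exact integral_mem_Icc (hf.comp (by fun_prop)) fun y => hab _
  have hpow {u r : ℝ} (hu : u ∈ Set.Icc a b) (hr : 0 ≤ r) : u ^ r ∈ Set.Icc (a ^ r) (b ^ r) :=
    ⟨rpow_le_rpow ha.le hu.1 hr, rpow_le_rpow (ha.le.trans hu.1) hu.2 hr⟩
  have hOUint : Integrable (fun x => OU n t f x ^ q₂) (gaussianMeasure n) :=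
    integrable_of_mem_Icc (hOUm.pow_const q₂) fun x => hpow (hOUab x) hq₂.le
  set M := ∫ x, OU n t f x ^ q₂ ∂gaussianMeasure n with hM
  have hMpos : 0 < M :=
    (rpow_pos_of_pos ha q₂).trans_le
      (integral_mem_Icc (hOUm.pow_const q₂) fun x => hpow (hOUab x) hq₂.le).1
  have hθ : cos θ ^ 2 * (1 / q₁ * ((1 - q₂) / q₂)) ≤ (1 / q₁ - 1) * ((1 - q₂) / q₂ + 1) := by
    have hexp : cos θ ^ 2 * exp (2 * t) = 1 := by
      rw [hcos, ← exp_nat_mul, ← exp_add]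
      simp
    have hone : cos θ ^ 2 * (1 - q₂) = 1 - q₁ := by
      linear_combination (-cos θ ^ 2) * hqt + (1 - q₁) * hexp
    refine le_of_eq ?_
    field_simp
    linear_combination hone
  have key := rpow_integral_mul_rpow_integral_le (gaussianMeasure n) hγ hγv (θ := θ)
    (a := min (a ^ q₁) (a ^ q₂)) (b := max (b ^ q₁) (b ^ q₂)) (α := 1 / q₁) (β := (1 - q₂) / q₂)
    (by positivity) (by positivity) (by rw [le_div_iff₀ hq₁pos]; linarith)
    (div_nonneg (by linarith) hq₂.le) hθ (F := fun x => f x ^ q₁) (G := fun x => OU n t f x ^ q₂)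
    (hf.pow_const q₁) (hOUm.pow_const q₂)
    (fun x => Set.Icc_subset_Icc (min_le_left _ _) (le_max_left _ _) (hpow (hab x) hq₁pos.le))
    fun x => Set.Icc_subset_Icc (min_le_right _ _) (le_max_right _ _) (hpow (hOUab x) hq₂.le)
  have hrhs : ∫ w, (f (cos θ • w.1 + sin θ • w.2) ^ q₁) ^ (1 / q₁) *
      (OU n t f w.1 ^ q₂) ^ (-((1 - q₂) / q₂))
        ∂((gaussianMeasure n).prod (gaussianMeasure n)) = M := by
    have hsimp (w : EuclideanSpace ℝ (Fin n) × EuclideanSpace ℝ (Fin n)) :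
        (f (cos θ • w.1 + sin θ • w.2) ^ q₁) ^ (1 / q₁) *
          (OU n t f w.1 ^ q₂) ^ (-((1 - q₂) / q₂)) =
        f (cos θ • w.1 + sin θ • w.2) * OU n t f w.1 ^ (q₂ - 1) := by
      rw [← rpow_mul (ha.le.trans (hab _).1), ← rpow_mul (ha.le.trans (hOUab _).1),
        mul_one_div_cancel hq₁pos.ne', rpow_one]
      congr 2
      field_simp
      ring
    simp only [hsimp]
    have hint : Integrable (fun w : EuclideanSpace ℝ (Fin n) × EuclideanSpace ℝ (Fin n) =>
        f (cos θ • w.1 + sin θ • w.2) * OU n t f w.1 ^ (q₂ - 1))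
        ((gaussianMeasure n).prod (gaussianMeasure n)) := by
      refine integrable_of_mem_Icc (a := 0) (b := b * a ^ (q₂ - 1))
        (hmeas.mul ((hOUm.comp measurable_fst).pow_const _)) fun w => ⟨?_, ?_⟩
      · exact mul_nonneg (ha.le.trans (hab _).1) (rpow_nonneg (ha.le.trans (hOUab _).1) _)
      · exact mul_le_mul (hab _).2 (rpow_le_rpow_of_nonpos ha (hOUab _).1 (by linarith))
          (rpow_nonneg (ha.le.trans (hOUab _).1) _) hb.le
    rw [integral_prod _ hint, hM]
    refine integral_congr_ae (.of_forall fun x => ?_)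
    have hx := ha.trans_le (hOUab x).1
    simp only
    rw [integral_mul_const, ← hOU, rpow_sub_one hx.ne', mul_div_cancel₀ _ hx.ne']
  rw [hrhs, rpow_neg hMpos.le, ← div_eq_mul_inv, div_le_iff₀ (rpow_pos_of_pos hMpos _)] at key
  refine key.trans_eq ?_
  nth_rewrite 1 [← rpow_one M]
  rw [← rpow_add hMpos]
  congr 1
  field_simp
  ring
end

section
/- Let n ≥ 1 and let f : ℝ^n → ℝ be a smooth function with 0 < a ≤ f ≤ b for some constants a, b and with bounded gradient. Then for every t > 0 and every x ∈ ℝ^n, P_t(f log f)(x) − P_t f(x) · log P_t f(x) ≤ t · P_t(|∇f|²/f)(x) (local logarithmic Sobolev inequality for the Euclidean heat semigroup). -/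
open MeasureTheory Real

/-- Euclidean heat semigroup, with `heat n 0 f = f`. -/
noncomputable def heat (n : ℕ) (t : ℝ) (f : EuclideanSpace ℝ (Fin n) → ℝ)
    (x : EuclideanSpace ℝ (Fin n)) : ℝ :=
  if t = 0 then f x
  else (4 * π * t) ^ (-(n : ℝ) / 2) * ∫ y, f y * Real.exp (-‖x - y‖ ^ 2 / (4 * t))

open ProbabilityTheory
open scoped RealInnerProductSpace

section Rotation

variable {E : Type*} [NormedAddCommGroup E] [InnerProductSpace ℝ E]

lemma norm_cos_smul_add_sin_smul_le (θ : ℝ) (x y : E) :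
    ‖cos θ • x + sin θ • y‖ ≤ ‖x‖ + ‖y‖ := by
  refine (norm_add_le _ _).trans ?_
  rw [norm_smul, norm_smul]
  gcongr
  · exact mul_le_of_le_one_left (norm_nonneg _) (abs_cos_le_one θ)
  · exact mul_le_of_le_one_left (norm_nonneg _) (abs_sin_le_one θ)

lemma norm_neg_sin_smul_add_cos_smul_le (θ : ℝ) (x y : E) :
    ‖-sin θ • x + cos θ • y‖ ≤ ‖x‖ + ‖y‖ := by
  simpa [cos_add_pi_div_two, sin_add_pi_div_two] using
    norm_cos_smul_add_sin_smul_le (θ + π / 2) x y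

lemma hasDerivAt_rotation_fst (θ : ℝ) (x y : E) :
    HasDerivAt (fun θ ↦ cos θ • x + sin θ • y) (-sin θ • x + cos θ • y) θ :=
  ((hasDerivAt_cos θ).smul_const x).add ((hasDerivAt_sin θ).smul_const y)

lemma hasDerivAt_rotation_snd (θ : ℝ) (x y : E) :
    HasDerivAt (fun θ ↦ -sin θ • x + cos θ • y) (-(cos θ • x + sin θ • y)) θ := by
  have h := ((hasDerivAt_sin θ).neg.smul_const x).add ((hasDerivAt_cos θ).smul_const y)
  rwa [neg_smul, neg_smul, ← neg_add] at h

lemma cos_smul_sub_sin_smul_rotation (θ : ℝ) (x y : E) :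
    cos θ • (cos θ • x + sin θ • y) - sin θ • (-sin θ • x + cos θ • y) = x :=
  (by module : _ = (cos θ ^ 2 + sin θ ^ 2) • x).trans (by rw [cos_sq_add_sin_sq, one_smul])

lemma sin_smul_add_cos_smul_rotation (θ : ℝ) (x y : E) :
    sin θ • (cos θ • x + sin θ • y) + cos θ • (-sin θ • x + cos θ • y) = y :=
  (by module : _ = (cos θ ^ 2 + sin θ ^ 2) • y).trans (by rw [cos_sq_add_sin_sq, one_smul])

lemma HasGradientAt.hasDerivAt_comp [CompleteSpace E] {f : E → ℝ} {p v : E} {c : ℝ → E} {θ : ℝ}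
    (hf : HasGradientAt f p (c θ)) (hc : HasDerivAt c v θ) :
    HasDerivAt (fun θ ↦ f (c θ)) ⟪p, v⟫ θ := by
  have h := hf.hasFDerivAt.comp_hasDerivAt θ hc
  rwa [InnerProductSpace.toDual_apply_apply] at h

end Rotation

section GaussianRotation

variable {E : Type*} [NormedAddCommGroup E] [InnerProductSpace ℝ E] [FiniteDimensional ℝ E]
  [MeasurableSpace E] [BorelSpace E]

lemma measurePreserving_rotation_stdGaussian (θ : ℝ) :
    MeasurePreserving (fun z : E × E ↦ (cos θ • z.1 + sin θ • z.2, -sin θ • z.1 + cos θ • z.2))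
      ((stdGaussian E).prod (stdGaussian E)) ((stdGaussian E).prod (stdGaussian E)) := by
  refine ⟨by fun_prop, ?_⟩
  have := IsGaussian.map_rotation_eq_self (μ := stdGaussian E) (by simp) θ
  convert this using 2
  ext z <;> simp [ContinuousLinearMap.rotation_apply]

lemma measurableEmbedding_rotation (θ : ℝ) : MeasurableEmbedding
    (fun z : E × E ↦ (cos θ • z.1 + sin θ • z.2, -sin θ • z.1 + cos θ • z.2)) := by
  refine Continuous.measurableEmbedding (by fun_prop) fun z w h ↦ ?_
  simp only [Prod.mk.injEq] at h
  obtain ⟨h₁, h₂⟩ := h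
  refine Prod.ext ?_ ?_
  · rw [← cos_smul_sub_sin_smul_rotation θ z.1 z.2, h₁, h₂, cos_smul_sub_sin_smul_rotation]
  · rw [← sin_smul_add_cos_smul_rotation θ z.1 z.2, h₁, h₂, sin_smul_add_cos_smul_rotation]

lemma integral_comp_rotation (θ : ℝ) (F : E × E → ℝ) :
    ∫ z : E × E, F (cos θ • z.1 + sin θ • z.2, -sin θ • z.1 + cos θ • z.2)
        ∂(stdGaussian E).prod (stdGaussian E) =
      ∫ z, F z ∂(stdGaussian E).prod (stdGaussian E) :=
  (measurePreserving_rotation_stdGaussian θ).integral_comp (measurableEmbedding_rotation θ) F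

lemma integrable_norm_stdGaussian : Integrable (fun x : E ↦ ‖x‖) (stdGaussian E) :=
  IsGaussian.integrable_id.norm

lemma integrable_norm_add_norm_sq :
    Integrable (fun z : E × E ↦ (‖z.1‖ + ‖z.2‖) ^ 2) ((stdGaussian E).prod (stdGaussian E)) := by
  have h : MemLp (fun x : E ↦ ‖x‖) 2 (stdGaussian E) := IsGaussian.memLp_two_id.norm
  exact ((h.comp_fst _).add (h.comp_snd _)).integrable_sq

lemma integrable_norm_add_norm :
    Integrable (fun z : E × E ↦ ‖z.1‖ + ‖z.2‖) ((stdGaussian E).prod (stdGaussian E)) :=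
  (integrable_norm_stdGaussian.comp_fst _).add (integrable_norm_stdGaussian.comp_snd _)

lemma integral_inner_mul_inner_stdGaussian (p q : E) :
    ∫ w, ⟪p, w⟫ * ⟪q, w⟫ ∂stdGaussian E = ⟪p, q⟫ := by
  have := covarianceBilin_apply (μ := stdGaussian E) IsGaussian.memLp_two_id p q
  simpa [covarianceBilin_stdGaussian, innerSL_apply_apply ℝ] using this.symm

/-- Gaussian integration by parts. -/
lemma integral_mul_inner_stdGaussian {h : E → ℝ} {h' : E → E} {M K : ℝ}
    (hh : ∀ v, HasGradientAt h (h' v) v) (hc : Continuous h')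
    (hM : ∀ v, |h v| ≤ M) (hK : ∀ v, ‖h' v‖ ≤ K) (p : E) :
    ∫ v, h v * ⟪p, v⟫ ∂stdGaussian E = ∫ v, ⟪p, h' v⟫ ∂stdGaussian E := by
  have hcont : Continuous h := continuous_iff_continuousAt.2 fun v ↦ (hh v).continuousAt
  have hM0 : 0 ≤ M := (abs_nonneg _).trans (hM 0)
  have hK0 : 0 ≤ K := (norm_nonneg _).trans (hK 0)
  set γ := stdGaussian E
  let R : ℝ → E × E → E := fun θ z ↦ cos θ • z.1 + sin θ • z.2
  let S : ℝ → E × E → E := fun θ z ↦ -sin θ • z.1 + cos θ • z.2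
  have hconst : ∀ θ, ∫ z, h (R θ z) * ⟪p, S θ z⟫ ∂γ.prod γ = 0 := fun θ ↦ by
    rw [integral_comp_rotation θ (fun z ↦ h z.1 * ⟪p, z.2⟫),
      integral_prod_mul (μ := γ) (ν := γ) h (fun w ↦ ⟪p, w⟫)]
    have : ∫ w, ⟪p, w⟫ ∂γ = 0 := integral_strongDual_stdGaussian (innerSL ℝ p)
    rw [this, mul_zero]
  have hInt : Integrable (fun z : E × E ↦
      K * (‖z.1‖ + ‖z.2‖) * (‖p‖ * (‖z.1‖ + ‖z.2‖)) + M * (‖p‖ * (‖z.1‖ + ‖z.2‖))) (γ.prod γ) := by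
    refine ((integrable_norm_add_norm_sq.const_mul (K * ‖p‖)).add
      (integrable_norm_add_norm.const_mul (M * ‖p‖))).congr (.of_forall fun z ↦ ?_)
    simp only [Pi.add_apply]
    ring
  have hder := hasDerivAt_integral_of_dominated_loc_of_deriv_le (μ := γ.prod γ) (x₀ := (0 : ℝ))
    (F := fun θ z ↦ h (R θ z) * ⟪p, S θ z⟫)
    (F' := fun θ z ↦ ⟪h' (R θ z), S θ z⟫ * ⟪p, S θ z⟫ + h (R θ z) * ⟪p, -R θ z⟫)
    (s := Set.univ) Filter.univ_mem
    (.of_forall fun θ ↦ by fun_prop) ?_ (by fun_prop) (.of_forall fun z θ _ ↦ ?_) hInt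
    (.of_forall fun z θ _ ↦ ?_)
  · simp only [hconst] at hder
    have h0 := hder.2.unique (hasDerivAt_const _ _)
    simp only [R, S, cos_zero, sin_zero, one_smul, zero_smul, add_zero, neg_zero, zero_add,
      inner_neg_right, mul_neg, ← sub_eq_add_neg] at h0
    have h1 : Integrable (fun z : E × E ↦ h z.1 * ⟪p, z.1⟫) (γ.prod γ) := by
      refine (integrable_norm_add_norm.const_mul (M * ‖p‖)).mono' (by fun_prop)
        (.of_forall fun z ↦ ?_)
      rw [norm_mul, mul_assoc]
      refine mul_le_mul (hM _) ((norm_inner_le_norm _ _).trans ?_) (norm_nonneg _) hM0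
      gcongr
      exact le_add_of_nonneg_right (norm_nonneg _)
    have h2 : Integrable (fun z : E × E ↦ ⟪h' z.1, z.2⟫ * ⟪p, z.2⟫) (γ.prod γ) := by
      refine (integrable_norm_add_norm_sq.const_mul (K * ‖p‖)).mono' (by fun_prop)
        (.of_forall fun z ↦ ?_)
      have hz : ‖z.2‖ ≤ ‖z.1‖ + ‖z.2‖ := le_add_of_nonneg_left (norm_nonneg _)
      calc ‖⟪h' z.1, z.2⟫ * ⟪p, z.2⟫‖ ≤ (‖h' z.1‖ * ‖z.2‖) * (‖p‖ * ‖z.2‖) := by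
            rw [norm_mul]
            gcongr <;> exact norm_inner_le_norm _ _
        _ ≤ (K * (‖z.1‖ + ‖z.2‖)) * (‖p‖ * (‖z.1‖ + ‖z.2‖)) := by
            gcongr
            exact hK _
        _ = K * ‖p‖ * (‖z.1‖ + ‖z.2‖) ^ 2 := by ring
    rw [integral_sub h2 h1, integral_prod _ h2, integral_prod _ h1, sub_eq_zero] at h0
    simp only [γ, integral_inner_mul_inner_stdGaussian, integral_const, probReal_univ,
      one_smul] at h0
    simp only [← h0, γ, real_inner_comm p]
  · refine (integrable_norm_add_norm.const_mul (M * ‖p‖)).mono' (by fun_prop)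
      (.of_forall fun z ↦ ?_)
    rw [norm_mul, mul_assoc]
    refine mul_le_mul (hM _) ((norm_inner_le_norm _ _).trans ?_) (norm_nonneg _) hM0
    gcongr
    exact norm_neg_sin_smul_add_cos_smul_le _ _ _
  · have hR : ‖R θ z‖ ≤ ‖z.1‖ + ‖z.2‖ := norm_cos_smul_add_sin_smul_le _ _ _
    have hS : ‖S θ z‖ ≤ ‖z.1‖ + ‖z.2‖ := norm_neg_sin_smul_add_cos_smul_le _ _ _
    refine (norm_add_le _ _).trans (add_le_add ?_ ?_)
    · rw [norm_mul]
      refine mul_le_mul ((norm_inner_le_norm _ _).trans ?_) ((norm_inner_le_norm _ _).trans ?_)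
        (norm_nonneg _) (by positivity)
      · gcongr
        exact hK _
      · gcongr
    · rw [norm_mul]
      refine mul_le_mul (hM _) ((norm_inner_le_norm _ _).trans ?_) (norm_nonneg _) hM0
      rw [norm_neg]
      gcongr
  · have h1 : HasDerivAt (fun θ ↦ h (R θ z)) ⟪h' (R θ z), S θ z⟫ θ :=
      (hh (R θ z)).hasDerivAt_comp (hasDerivAt_rotation_fst θ z.1 z.2)
    have h2 : HasDerivAt (fun θ ↦ ⟪p, S θ z⟫) ⟪p, -R θ z⟫ θ :=
      (innerSL ℝ p).hasFDerivAt.comp_hasDerivAt θ (hasDerivAt_rotation_snd θ z.1 z.2)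
    exact h1.mul h2

/-- Gaussian average of `f` over the points `cos θ • x + sin θ • y`, a time change of the
Ornstein-Uhlenbeck semigroup. -/
noncomputable def mehler {F : Type*} [NormedAddCommGroup F] [NormedSpace ℝ F]
    (f : E → F) (θ : ℝ) (x : E) : F :=
  ∫ y, f (cos θ • x + sin θ • y) ∂stdGaussian E

lemma integrable_comp_rotation {F : Type*} [NormedAddCommGroup F] [SecondCountableTopology F]
    {g : E → F} {C : ℝ} (hg : Continuous g) (hC : ∀ x, ‖g x‖ ≤ C) (θ : ℝ) (x : E) :
    Integrable (fun y ↦ g (cos θ • x + sin θ • y)) (stdGaussian E) :=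
  .of_bound (by fun_prop) C (.of_forall fun _ ↦ hC _)

lemma continuous_mehler {F : Type*} [NormedAddCommGroup F] [NormedSpace ℝ F]
    [SecondCountableTopology F] {g : E → F} {C : ℝ} (hg : Continuous g) (hC : ∀ x, ‖g x‖ ≤ C)
    (θ : ℝ) : Continuous (mehler g θ) :=
  continuous_of_dominated (bound := fun _ ↦ C) (fun _ ↦ by fun_prop)
    (fun _ ↦ .of_forall fun _ ↦ hC _) (integrable_const _) (.of_forall fun _ ↦ by fun_prop)

lemma norm_mehler_le {F : Type*} [NormedAddCommGroup F] [NormedSpace ℝ F]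
    {g : E → F} {C : ℝ} (hC : ∀ x, ‖g x‖ ≤ C) (θ : ℝ) (x : E) : ‖mehler g θ x‖ ≤ C := by
  simpa [mehler] using norm_integral_le_of_norm_le_const (μ := stdGaussian E)
    (.of_forall fun y ↦ hC (cos θ • x + sin θ • y))

lemma mehler_mem_Icc {f : E → ℝ} {a b : ℝ} (hf : Continuous f)
    (hab : ∀ x, f x ∈ Set.Icc a b) (θ : ℝ) (x : E) : mehler f θ x ∈ Set.Icc a b :=
  (convex_Icc a b).integral_mem isClosed_Icc (.of_forall fun _ ↦ hab _)
    (integrable_comp_rotation hf (fun x ↦ abs_le_max_abs_abs (hab x).1 (hab x).2) θ x)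

variable {f : E → ℝ} {f' : E → E} {a b C : ℝ}

lemma hasGradientAt_mehler (hf : ∀ x, HasGradientAt f (f' x) x) (hc : Continuous f')
    (hab : ∀ x, f x ∈ Set.Icc a b) (hC : ∀ x, ‖f' x‖ ≤ C) (θ : ℝ) (x : E) :
    HasGradientAt (mehler f θ) (cos θ • mehler f' θ x) x := by
  have hcont : Continuous f := continuous_iff_continuousAt.2 fun v ↦ (hf v).continuousAt
  have key := hasFDerivAt_integral_of_dominated_of_fderiv_le (μ := stdGaussian E) (x₀ := x)
    (F := fun x y ↦ f (cos θ • x + sin θ • y))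
    (F' := fun x y ↦ cos θ • InnerProductSpace.toDual ℝ E (f' (cos θ • x + sin θ • y)))
    (bound := fun _ ↦ C) (s := Set.univ) Filter.univ_mem
    (.of_forall fun _ ↦ by fun_prop)
    (integrable_comp_rotation hcont (fun x ↦ abs_le_max_abs_abs (hab x).1 (hab x).2) θ x)
    (Continuous.aestronglyMeasurable (by fun_prop))
    (.of_forall fun y x _ ↦ ?_) (integrable_const _) (.of_forall fun y x _ ↦ ?_)
  · refine key.congr_fderiv ?_
    ext v
    rw [ContinuousLinearMap.integral_apply]
    · simp only [smul_apply, InnerProductSpace.toDual_apply_apply, smul_eq_mul, inner_smul_left,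
        integral_const_mul, mehler]
      simp only [real_inner_comm v, integral_inner (integrable_comp_rotation hc hC θ x),
        conj_trivial]
    · refine .of_bound (Continuous.aestronglyMeasurable (by fun_prop)) C (.of_forall fun y ↦ ?_)
      rw [norm_smul, LinearIsometryEquiv.norm_map]
      exact (mul_le_of_le_one_left (norm_nonneg _) (abs_cos_le_one θ)).trans (hC _)
  · rw [norm_smul, LinearIsometryEquiv.norm_map]
    exact (mul_le_of_le_one_left (norm_nonneg _) (abs_cos_le_one θ)).trans (hC _)
  · have h1 : HasFDerivAt (fun x : E ↦ cos θ • x + sin θ • y)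
        (cos θ • ContinuousLinearMap.id ℝ E) x :=
      ((hasFDerivAt_id x).const_smul (cos θ)).add_const _
    refine ((hf _).hasFDerivAt.comp x h1).congr_fderiv ?_
    ext v
    simp

lemma hasDerivAt_mehler (hf : ∀ x, HasGradientAt f (f' x) x) (hc : Continuous f')
    (hab : ∀ x, f x ∈ Set.Icc a b) (hC : ∀ x, ‖f' x‖ ≤ C) (θ : ℝ) (x : E) :
    HasDerivAt (fun θ ↦ mehler f θ x)
      (∫ y, ⟪f' (cos θ • x + sin θ • y), -sin θ • x + cos θ • y⟫ ∂stdGaussian E) θ := by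
  have hcont : Continuous f := continuous_iff_continuousAt.2 fun v ↦ (hf v).continuousAt
  have hC0 : 0 ≤ C := (norm_nonneg _).trans (hC 0)
  refine (hasDerivAt_integral_of_dominated_loc_of_deriv_le (μ := stdGaussian E) (x₀ := θ)
    (F := fun θ y ↦ f (cos θ • x + sin θ • y))
    (F' := fun θ y ↦ ⟪f' (cos θ • x + sin θ • y), -sin θ • x + cos θ • y⟫)
    (bound := fun y ↦ C * (‖x‖ + ‖y‖)) (s := Set.univ) Filter.univ_mem
    (.of_forall fun _ ↦ by fun_prop)
    (integrable_comp_rotation hcont (fun x ↦ abs_le_max_abs_abs (hab x).1 (hab x).2) θ x)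
    (Continuous.aestronglyMeasurable (by fun_prop))
    (.of_forall fun y θ _ ↦ ?_)
    (((integrable_const _).add integrable_norm_stdGaussian).const_mul C)
    (.of_forall fun y θ _ ↦ ?_)).2
  · refine (norm_inner_le_norm _ _).trans ?_
    gcongr
    · exact hC _
    · exact norm_neg_sin_smul_add_cos_smul_le _ _ _
  · exact (hf _).hasDerivAt_comp (hasDerivAt_rotation_fst θ x y)

lemma abs_log_add_one_le {u : ℝ} (ha : 0 < a) (hu : u ∈ Set.Icc a b) :
    |log u + 1| ≤ max |log a| |log b| + 1 := by
  refine (abs_add_le _ _).trans ?_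
  rw [abs_one]
  gcongr
  exact abs_le_max_abs_abs (log_le_log ha hu.1) (log_le_log (ha.trans_le hu.1) hu.2)

lemma hasDerivAt_integral_mehler_mul_log (hf : ∀ x, HasGradientAt f (f' x) x)
    (hc : Continuous f') (ha : 0 < a) (hab : ∀ x, f x ∈ Set.Icc a b) (hC : ∀ x, ‖f' x‖ ≤ C)
    (θ : ℝ) :
    HasDerivAt (fun θ ↦ ∫ x, mehler f θ x * log (mehler f θ x) ∂stdGaussian E)
      (∫ x, (log (mehler f θ x) + 1) *
        ∫ y, ⟪f' (cos θ • x + sin θ • y), -sin θ • x + cos θ • y⟫ ∂stdGaussian E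
          ∂stdGaussian E) θ := by
  have hcont : Continuous f := continuous_iff_continuousAt.2 fun v ↦ (hf v).continuousAt
  have hC0 : 0 ≤ C := (norm_nonneg _).trans (hC 0)
  have hbd : ∀ x, ‖f x‖ ≤ max |a| |b| := fun x ↦ abs_le_max_abs_abs (hab x).1 (hab x).2
  have hm : ∀ θ x, mehler f θ x ∈ Set.Icc a b := mehler_mem_Icc hcont hab
  have hpos : ∀ θ x, mehler f θ x ≠ 0 := fun θ x ↦ (ha.trans_le (hm θ x).1).ne'
  have hmc : ∀ θ, Continuous (mehler f θ) := continuous_mehler hcont hbd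
  have hlc : ∀ θ, Continuous fun x ↦ log (mehler f θ x) := fun θ ↦ (hmc θ).log (hpos θ)
  set M := max |log a| |log b| + 1
  set m := ∫ y, ‖y‖ ∂stdGaussian E
  refine (hasDerivAt_integral_of_dominated_loc_of_deriv_le (μ := stdGaussian E) (x₀ := θ)
    (F := fun θ x ↦ mehler f θ x * log (mehler f θ x))
    (F' := fun θ x ↦ (log (mehler f θ x) + 1) *
        ∫ y, ⟪f' (cos θ • x + sin θ • y), -sin θ • x + cos θ • y⟫ ∂stdGaussian E)
    (bound := fun x ↦ M * (C * (‖x‖ + m))) (s := Set.univ) Filter.univ_mem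
    (.of_forall fun θ ↦ ((hmc θ).mul (hlc θ)).aestronglyMeasurable) ?_
    ?_ (.of_forall fun x θ _ ↦ ?_)
    (((integrable_norm_stdGaussian.add (integrable_const _)).const_mul C).const_mul M)
    (.of_forall fun x θ _ ↦ ?_)).2
  · refine .of_bound ((hmc θ).mul (hlc θ)).aestronglyMeasurable
      (max |a| |b| * max |log a| |log b|) (.of_forall fun x ↦ ?_)
    rw [norm_mul]
    gcongr
    · exact norm_mehler_le hbd θ x
    · exact abs_le_max_abs_abs (log_le_log ha (hm θ x).1)
        (log_le_log (ha.trans_le (hm θ x).1) (hm θ x).2)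
  · refine ((hlc θ).add continuous_const).aestronglyMeasurable.mul ?_
    refine StronglyMeasurable.aestronglyMeasurable ?_
    exact (Continuous.stronglyMeasurable (f := fun z : E × E ↦
      ⟪f' (cos θ • z.1 + sin θ • z.2), -sin θ • z.1 + cos θ • z.2⟫)
      (by fun_prop)).integral_prod_right'
  · rw [norm_mul]
    refine mul_le_mul (abs_log_add_one_le ha (hm θ x)) ?_ (norm_nonneg _) (by positivity)
    have hi : Integrable (fun y : E ↦ C * (‖x‖ + ‖y‖)) (stdGaussian E) :=
      ((integrable_const _).add integrable_norm_stdGaussian).const_mul C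
    refine (norm_integral_le_of_norm_le hi (.of_forall fun y ↦ ?_)).trans_eq ?_
    · refine (norm_inner_le_norm _ _).trans ?_
      gcongr
      · exact hC _
      · exact norm_neg_sin_smul_add_cos_smul_le _ _ _
    · rw [integral_const_mul, integral_add (integrable_const _) integrable_norm_stdGaussian]
      simp [m]
  · exact (hasDerivAt_mul_log (hpos θ x)).comp θ (hasDerivAt_mehler hf hc hab hC θ x)

lemma integral_log_mehler_mul (hf : ∀ x, HasGradientAt f (f' x) x)
    (hc : Continuous f') (ha : 0 < a) (hab : ∀ x, f x ∈ Set.Icc a b) (hC : ∀ x, ‖f' x‖ ≤ C)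
    (θ : ℝ) :
    ∫ x, (log (mehler f θ x) + 1) *
        ∫ y, ⟪f' (cos θ • x + sin θ • y), -sin θ • x + cos θ • y⟫ ∂stdGaussian E ∂stdGaussian E =
      -(sin θ * cos θ) * ∫ x, ‖mehler f' θ x‖ ^ 2 / mehler f θ x ∂stdGaussian E := by
  have hcont : Continuous f := continuous_iff_continuousAt.2 fun v ↦ (hf v).continuousAt
  have hC0 : 0 ≤ C := (norm_nonneg _).trans (hC 0)
  have hbd : ∀ x, ‖f x‖ ≤ max |a| |b| := fun x ↦ abs_le_max_abs_abs (hab x).1 (hab x).2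
  have hm : ∀ x, mehler f θ x ∈ Set.Icc a b := mehler_mem_Icc hcont hab θ
  have hpos : ∀ x, 0 < mehler f θ x := fun x ↦ ha.trans_le (hm x).1
  have hmc : Continuous (mehler f θ) := continuous_mehler hcont hbd θ
  have hm'c : Continuous (mehler f' θ) := continuous_mehler hc hC θ
  set M := max |log a| |log b| + 1
  have hM0 : 0 ≤ M := by positivity
  set γ := stdGaussian E
  let H : E → ℝ := fun x ↦ log (mehler f θ x) + 1
  let H' : E → E := fun x ↦ (mehler f θ x)⁻¹ • cos θ • mehler f' θ x
  have hHc : Continuous H := (hmc.log fun x ↦ (hpos x).ne').add continuous_const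
  have hH'c : Continuous H' := (hmc.inv₀ fun x ↦ (hpos x).ne').smul (hm'c.const_smul _)
  have hHM : ∀ x, |H x| ≤ M := fun x ↦ abs_log_add_one_le ha (hm x)
  have hH'K : ∀ x, ‖H' x‖ ≤ a⁻¹ * C := fun x ↦ by
    simp only [H', norm_smul, norm_inv, norm_of_nonneg (hpos x).le]
    refine mul_le_mul (inv_anti₀ ha (hm x).1) ?_ (by positivity) (by positivity)
    exact (mul_le_of_le_one_left (norm_nonneg _) (abs_cos_le_one θ)).trans (norm_mehler_le hC θ x)
  have hHH' : ∀ x, HasGradientAt H (H' x) x := fun x ↦ by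
    have h1 := (hasGradientAt_mehler hf hc hab hC θ x).hasFDerivAt
    refine ((h1.log (hpos x).ne').add_const 1).congr_fderiv ?_
    ext v
    simp [H']
  have hInt : ∀ K : E × E → ℝ, Continuous K → (∀ z, |K z| ≤ M * (C * (‖z.1‖ + ‖z.2‖))) →
      Integrable K (γ.prod γ) := fun K hK hKb ↦
    ((integrable_norm_add_norm.const_mul C).const_mul M).mono' hK.aestronglyMeasurable
      (.of_forall hKb)
  calc ∫ x, H x * ∫ y, ⟪f' (cos θ • x + sin θ • y), -sin θ • x + cos θ • y⟫ ∂γ ∂γ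
      = ∫ z, H z.1 * ⟪f' (cos θ • z.1 + sin θ • z.2), -sin θ • z.1 + cos θ • z.2⟫ ∂γ.prod γ := by
        rw [integral_prod]
        · simp only [integral_const_mul]
        · refine hInt _ (by fun_prop) fun z ↦ ?_
          rw [abs_mul]
          refine mul_le_mul (hHM _) ((abs_real_inner_le_norm _ _).trans ?_) (abs_nonneg _) hM0
          gcongr
          · exact hC _
          · exact norm_neg_sin_smul_add_cos_smul_le _ _ _
    _ = ∫ z, H (cos θ • z.1 - sin θ • z.2) * ⟪f' z.1, z.2⟫ ∂γ.prod γ := by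
        rw [← integral_comp_rotation θ
          (fun z ↦ H (cos θ • z.1 - sin θ • z.2) * ⟪f' z.1, z.2⟫)]
        simp only [cos_smul_sub_sin_smul_rotation, γ]
    _ = ∫ u, ∫ v, H (cos θ • u - sin θ • v) * ⟪f' u, v⟫ ∂γ ∂γ := by
        refine integral_prod _ (hInt _ (by fun_prop) fun z ↦ ?_)
        rw [abs_mul]
        refine mul_le_mul (hHM _) ((abs_real_inner_le_norm _ _).trans ?_) (abs_nonneg _) hM0
        gcongr
        · exact hC _
        · exact le_add_of_nonneg_left (norm_nonneg _)
    _ = ∫ u, ∫ v, ⟪f' u, -sin θ • H' (cos θ • u - sin θ • v)⟫ ∂γ ∂γ := by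
        refine integral_congr_ae (.of_forall fun u ↦ ?_)
        refine integral_mul_inner_stdGaussian (K := a⁻¹ * C)
          (h := fun v ↦ H (cos θ • u - sin θ • v)) (fun v ↦ ?_) (by fun_prop) (fun v ↦ hHM _)
          (fun v ↦ ?_) (f' u)
        · have h1 : HasFDerivAt (fun v : E ↦ cos θ • u - sin θ • v)
              (-(sin θ • ContinuousLinearMap.id ℝ E)) v :=
            ((hasFDerivAt_id v).const_smul (sin θ)).const_sub _
          refine ((hHH' _).hasFDerivAt.comp v h1).congr_fderiv ?_
          ext w
          simp
        · rw [norm_smul, norm_neg]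
          exact (mul_le_of_le_one_left (norm_nonneg _) (abs_sin_le_one θ)).trans (hH'K _)
    _ = ∫ z, ⟪f' z.1, -sin θ • H' (cos θ • z.1 - sin θ • z.2)⟫ ∂γ.prod γ := by
        refine (integral_prod (fun z : E × E ↦
          ⟪f' z.1, -sin θ • H' (cos θ • z.1 - sin θ • z.2)⟫) ?_).symm
        refine .of_bound (by fun_prop) (C * (1 * (a⁻¹ * C))) (.of_forall fun z ↦ ?_)
        refine (norm_inner_le_norm _ _).trans ?_
        rw [norm_smul, norm_neg]
        gcongr
        · exact hC _
        · exact abs_sin_le_one θ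
        · exact hH'K _
    _ = ∫ z, ⟪f' (cos θ • z.1 + sin θ • z.2), -sin θ • H' z.1⟫ ∂γ.prod γ := by
        rw [← integral_comp_rotation θ
          (fun z ↦ ⟪f' z.1, -sin θ • H' (cos θ • z.1 - sin θ • z.2)⟫)]
        simp only [cos_smul_sub_sin_smul_rotation, γ]
    _ = ∫ x, ∫ y, ⟪f' (cos θ • x + sin θ • y), -sin θ • H' x⟫ ∂γ ∂γ := by
        refine integral_prod (fun z : E × E ↦
          ⟪f' (cos θ • z.1 + sin θ • z.2), -sin θ • H' z.1⟫) ?_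
        refine .of_bound (by fun_prop) (C * (1 * (a⁻¹ * C))) (.of_forall fun z ↦ ?_)
        refine (norm_inner_le_norm _ _).trans ?_
        rw [norm_smul, norm_neg]
        gcongr
        · exact hC _
        · exact abs_sin_le_one θ
        · exact hH'K _
    _ = -(sin θ * cos θ) * ∫ x, ‖mehler f' θ x‖ ^ 2 / mehler f θ x ∂γ := by
        rw [← integral_const_mul]
        refine integral_congr_ae (.of_forall fun x ↦ ?_)
        simp only [real_inner_comm (-sin θ • H' x)]
        rw [integral_inner (integrable_comp_rotation hc hC θ x)]
        change ⟪-sin θ • H' x, mehler f' θ x⟫ = _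
        simp only [H', inner_smul_left, conj_trivial, real_inner_self_eq_norm_sq]
        ring

lemma norm_mehler_sq_div_le (hf : Continuous f) (hc : Continuous f') (ha : 0 < a)
    (hab : ∀ x, f x ∈ Set.Icc a b) (hC : ∀ x, ‖f' x‖ ≤ C) (θ : ℝ) (x : E) :
    ‖mehler f' θ x‖ ^ 2 / mehler f θ x ≤ mehler (fun z ↦ ‖f' z‖ ^ 2 / f z) θ x := by
  have hbd : ∀ x, ‖f x‖ ≤ max |a| |b| := fun x ↦ abs_le_max_abs_abs (hab x).1 (hab x).2
  have hfpos : ∀ x, 0 < f x := fun x ↦ ha.trans_le (hab x).1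
  have hpos : 0 < mehler f θ x := ha.trans_le (mehler_mem_Icc hf hab θ x).1
  set p := (mehler f θ x)⁻¹ • mehler f' θ x with hp
  have hi1 := integrable_comp_rotation hf hbd θ x
  have hi2 := integrable_comp_rotation hc hC θ x
  have hi3 : Integrable (fun y ↦ ‖f' (cos θ • x + sin θ • y)‖ ^ 2 / f (cos θ • x + sin θ • y))
      (stdGaussian E) := by
    refine integrable_comp_rotation (g := fun z ↦ ‖f' z‖ ^ 2 / f z) (C := C ^ 2 / a)
      ((hc.norm.pow 2).div hf fun x ↦ (hfpos x).ne') (fun z ↦ ?_) θ x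
    rw [norm_of_nonneg (by have := hfpos z; positivity)]
    gcongr
    · exact hC z
    · exact (hab z).1
  have key : ∫ y, (2 * ⟪p, f' (cos θ • x + sin θ • y)⟫ - f (cos θ • x + sin θ • y) * ‖p‖ ^ 2)
      ∂stdGaussian E ≤ mehler (fun z ↦ ‖f' z‖ ^ 2 / f z) θ x := by
    refine integral_mono (((hi2.const_inner p).const_mul 2).sub (hi1.mul_const _)) hi3 fun y ↦ ?_
    simp only
    set w := cos θ • x + sin θ • y
    rw [le_div_iff₀ (hfpos w)]
    have h := sq_nonneg ‖f' w - f w • p‖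
    rw [norm_sub_sq_real, norm_smul, inner_smul_right, norm_of_nonneg (hfpos w).le,
      real_inner_comm] at h
    linarith
  rw [integral_sub ((hi2.const_inner p).const_mul 2) (hi1.mul_const _), integral_const_mul,
    integral_mul_const, integral_inner hi2] at key
  change 2 * ⟪p, mehler f' θ x⟫ - mehler f θ x * ‖p‖ ^ 2 ≤ _ at key
  refine le_trans (le_of_eq ?_) key
  rw [hp, inner_smul_left, norm_smul, real_inner_self_eq_norm_sq, norm_inv,
    norm_of_nonneg hpos.le, conj_trivial]
  field_simp
  ring

lemma integral_mehler {g : E → ℝ} {D : ℝ} (hg : Continuous g) (hD : ∀ x, ‖g x‖ ≤ D) (θ : ℝ) :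
    ∫ x, mehler g θ x ∂stdGaussian E = ∫ x, g x ∂stdGaussian E := by
  have h := integral_comp_rotation (E := E) θ fun z ↦ g z.1
  rw [integral_prod, integral_prod] at h
  · simpa [mehler] using h
  · exact .of_bound (by fun_prop) D (.of_forall fun z ↦ hD _)
  · exact .of_bound (by fun_prop) D (.of_forall fun z ↦ hD _)

/-- The Gaussian logarithmic Sobolev inequality. -/
theorem logSobolev_stdGaussian (hf : ∀ x, HasGradientAt f (f' x) x)
    (hc : Continuous f') (ha : 0 < a) (hab : ∀ x, f x ∈ Set.Icc a b) (hC : ∀ x, ‖f' x‖ ≤ C) :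
    ∫ x, f x * log (f x) ∂stdGaussian E -
        (∫ x, f x ∂stdGaussian E) * log (∫ x, f x ∂stdGaussian E) ≤
      1 / 2 * ∫ x, ‖f' x‖ ^ 2 / f x ∂stdGaussian E := by
  have hcont : Continuous f := continuous_iff_continuousAt.2 fun v ↦ (hf v).continuousAt
  have hbd : ∀ x, ‖f x‖ ≤ max |a| |b| := fun x ↦ abs_le_max_abs_abs (hab x).1 (hab x).2
  have hfpos : ∀ x, 0 < f x := fun x ↦ ha.trans_le (hab x).1
  have hgc : Continuous fun z ↦ ‖f' z‖ ^ 2 / f z :=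
    (hc.norm.pow 2).div hcont fun x ↦ (hfpos x).ne'
  have hgC : ∀ z, ‖‖f' z‖ ^ 2 / f z‖ ≤ C ^ 2 / a := fun z ↦ by
    rw [norm_of_nonneg (by have := hfpos z; positivity)]
    gcongr
    · exact hC z
    · exact (hab z).1
  set I := ∫ x, ‖f' x‖ ^ 2 / f x ∂stdGaussian E with hI
  have hle : ∀ θ, ∫ x, ‖mehler f' θ x‖ ^ 2 / mehler f θ x ∂stdGaussian E ≤ I := fun θ ↦ by
    rw [hI, ← integral_mehler hgc hgC θ]
    refine integral_mono_of_nonneg (.of_forall fun x ↦ ?_)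
      (.of_bound (continuous_mehler hgc hgC θ).aestronglyMeasurable _
        (.of_forall (norm_mehler_le hgC θ)))
      (.of_forall (norm_mehler_sq_div_le hcont hc ha hab hC θ))
    have := ha.trans_le (mehler_mem_Icc hcont hab θ x).1
    simp only [Pi.zero_apply]
    positivity
  have hder : ∀ θ, HasDerivAt (fun θ ↦
      ∫ x, mehler f θ x * log (mehler f θ x) ∂stdGaussian E + sin θ ^ 2 * (I / 2))
      (sin θ * cos θ * (I - ∫ x, ‖mehler f' θ x‖ ^ 2 / mehler f θ x ∂stdGaussian E)) θ :=
    fun θ ↦ by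
      have h := (hasDerivAt_integral_mehler_mul_log hf hc ha hab hC θ).add
        (((hasDerivAt_sin θ).pow 2).mul_const (I / 2))
      rw [integral_log_mehler_mul hf hc ha hab hC θ] at h
      refine h.congr_deriv ?_
      push_cast
      ring
  have hmono : MonotoneOn (fun θ ↦
      ∫ x, mehler f θ x * log (mehler f θ x) ∂stdGaussian E + sin θ ^ 2 * (I / 2))
      (Set.Icc 0 (π / 2)) := by
    refine monotoneOn_of_hasDerivWithinAt_nonneg (convex_Icc _ _)
      (fun θ _ ↦ (hder θ).continuousAt.continuousWithinAt)
      (fun θ _ ↦ (hder θ).hasDerivWithinAt) fun θ hθ ↦ ?_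
    rw [interior_Icc] at hθ
    have h1 := sin_nonneg_of_nonneg_of_le_pi hθ.1.le (by linarith [hθ.2, pi_pos])
    have h2 := cos_nonneg_of_neg_pi_div_two_le_of_le (by linarith [hθ.1, pi_pos]) hθ.2.le
    exact mul_nonneg (mul_nonneg h1 h2) (sub_nonneg.2 (hle θ))
  have h := hmono (Set.left_mem_Icc.2 (by positivity)) (Set.right_mem_Icc.2 (by positivity))
    (by positivity)
  simp only [mehler, cos_zero, sin_zero, one_smul, zero_smul, add_zero, cos_pi_div_two,
    sin_pi_div_two, zero_add, integral_const, probReal_univ] at h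
  norm_num at h
  linarith

end GaussianRotation

section HeatKernel

variable {n : ℕ}

lemma stdGaussian_eq_withDensity :
    stdGaussian (EuclideanSpace ℝ (Fin n)) = volume.withDensity fun z ↦
      ENNReal.ofReal ((2 * π) ^ (-(n : ℝ) / 2) * exp (-(1 / 2) * ‖z‖ ^ 2)) := by
  have hInt : Integrable fun z : EuclideanSpace ℝ (Fin n) ↦ exp (-(1 / 2) * ‖z‖ ^ 2) := by
    refine .of_integral_ne_zero ?_
    rw [GaussianFourier.integral_rexp_neg_mul_sq_norm (by norm_num)]
    positivity
  have := isFiniteMeasure_withDensity_ofReal (hInt.const_mul ((2 * π) ^ (-(n : ℝ) / 2))).2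
  refine Measure.ext_of_charFun (funext fun ξ ↦ ?_)
  rw [charFun_stdGaussian, charFun_apply, integral_withDensity_eq_integral_toReal_smul
    (by fun_prop) (by simp)]
  have h := GaussianFourier.integral_cexp_neg_mul_sq_norm_add (V := EuclideanSpace ℝ (Fin n))
    (b := 1 / 2) (by norm_num) Complex.I ξ
  have hcongr : ∀ z : EuclideanSpace ℝ (Fin n),
      (ENNReal.ofReal ((2 * π) ^ (-(n : ℝ) / 2) * exp (-(1 / 2) * ‖z‖ ^ 2))).toReal •
        Complex.exp (⟪z, ξ⟫ * Complex.I) =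
      (((2 * π) ^ (-(n : ℝ) / 2) : ℝ) : ℂ) *
        Complex.exp (-(1 / 2) * ‖z‖ ^ 2 + Complex.I * ⟪ξ, z⟫) := fun z ↦ by
    rw [ENNReal.toReal_ofReal (by positivity), Complex.real_smul, Complex.exp_add,
      real_inner_comm]
    push_cast
    ring_nf
  simp only [hcongr]
  rw [integral_const_mul, h, finrank_euclideanSpace_fin]
  have hpow : ((π : ℂ) / (1 / 2)) ^ ((n : ℂ) / 2) = (((2 * π) ^ ((n : ℝ) / 2) : ℝ) : ℂ) := by
    rw [Complex.ofReal_cpow (by positivity)]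
    push_cast
    congr 1
    ring
  rw [hpow, ← mul_assoc, ← Complex.ofReal_mul, ← rpow_add (by positivity),
    neg_div (2 : ℝ), neg_add_cancel, rpow_zero, Complex.ofReal_one, one_mul, Complex.I_sq]
  congr 1
  ring

lemma heat_eq_integral_stdGaussian {t : ℝ} (ht : 0 < t) (g : EuclideanSpace ℝ (Fin n) → ℝ)
    (x : EuclideanSpace ℝ (Fin n)) :
    heat n t g x = ∫ z, g (x + √(2 * t) • z) ∂stdGaussian (EuclideanSpace ℝ (Fin n)) := by
  have hs : 0 < √(2 * t) := by positivity
  have hs2 : √(2 * t) ^ 2 = 2 * t := sq_sqrt (by positivity)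
  rw [heat, if_neg ht.ne', stdGaussian_eq_withDensity,
    integral_withDensity_eq_integral_toReal_smul (by fun_prop) (by simp)]
  let F : EuclideanSpace ℝ (Fin n) → ℝ := fun w ↦ (2 * π) ^ (-(n : ℝ) / 2) *
    (g (x + w) * exp (-‖x - (x + w)‖ ^ 2 / (4 * t)))
  have hcongr : ∀ z : EuclideanSpace ℝ (Fin n),
      (ENNReal.ofReal ((2 * π) ^ (-(n : ℝ) / 2) * exp (-(1 / 2) * ‖z‖ ^ 2))).toReal •
        g (x + √(2 * t) • z) =
      F (√(2 * t) • z) := fun z ↦ by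
    rw [ENNReal.toReal_ofReal (by positivity), smul_eq_mul]
    simp only [F, sub_add_cancel_left, norm_neg, norm_smul, norm_of_nonneg hs.le, mul_pow, hs2]
    rw [show -(2 * t * ‖z‖ ^ 2) / (4 * t) = -(1 / 2) * ‖z‖ ^ 2 by field_simp; ring]
    ring
  rw [integral_congr_ae (.of_forall hcongr), Measure.integral_comp_smul volume F, integral_const_mul,
    integral_add_left_eq_self (fun y ↦ g y * exp (-‖x - y‖ ^ 2 / (4 * t))) x,
    finrank_euclideanSpace_fin, abs_of_nonneg (by positivity), smul_eq_mul, ← mul_assoc]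
  congr 1
  have hpow : (√(2 * t) ^ n)⁻¹ = (2 * t) ^ (-(n : ℝ) / 2) := by
    rw [sqrt_eq_rpow, ← rpow_natCast, ← rpow_mul (by positivity), ← rpow_neg (by positivity)]
    congr 1
    ring
  rw [hpow, ← mul_rpow (by positivity) (by positivity)]
  congr 1
  ring

end HeatKernel

theorem local_logSobolev_heat (n : ℕ) (hn : 1 ≤ n)
    (f : EuclideanSpace ℝ (Fin n) → ℝ) (hf : ContDiff ℝ (⊤ : ℕ∞) f)
    (a b : ℝ) (ha : 0 < a) (hab : ∀ x, a ≤ f x ∧ f x ≤ b)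
    (C : ℝ) (hgrad : ∀ x, ‖gradient f x‖ ≤ C)
    (t : ℝ) (ht : 0 < t) (x : EuclideanSpace ℝ (Fin n)) :
    heat n t (fun y => f y * Real.log (f y)) x - heat n t f x * Real.log (heat n t f x) ≤
      t * heat n t (fun y => ‖gradient f y‖ ^ 2 / f y) x := by
  set s := √(2 * t)
  have hs2 : s ^ 2 = 2 * t := sq_sqrt (by positivity)
  have hdiff : ∀ y, HasGradientAt f (gradient f y) y := fun y ↦
    (hf.differentiable (by simp) y).hasGradientAt
  have hgc : Continuous (gradient f) :=
    (InnerProductSpace.toDual ℝ _).symm.continuous.comp (hf.continuous_fderiv (by simp))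
  have hgrad_comp : ∀ z, HasGradientAt (fun z ↦ f (x + s • z)) (s • gradient f (x + s • z)) z :=
    fun z ↦ by
      have h1 : HasFDerivAt (fun z : EuclideanSpace ℝ (Fin n) ↦ x + s • z)
          (s • ContinuousLinearMap.id ℝ _) z :=
        ((hasFDerivAt_id z).const_smul s).const_add x
      refine ((hdiff _).hasFDerivAt.comp z h1).congr_fderiv ?_
      ext v
      simp
  have key := logSobolev_stdGaussian (C := s * C) hgrad_comp (by fun_prop) ha
    (fun z ↦ hab (x + s • z)) fun z ↦ by
      rw [norm_smul, norm_of_nonneg (sqrt_nonneg _)]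
      exact mul_le_mul_of_nonneg_left (hgrad _) (sqrt_nonneg _)
  simp only [heat_eq_integral_stdGaussian ht]
  refine key.trans_eq ?_
  simp only [norm_smul, mul_pow, norm_eq_abs, sq_abs, hs2, mul_div_assoc, integral_const_mul]
  ring
end
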